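/- arXiv:1608.03014 — 6 statements merged into one kernel-verified Lean document; each statement's English description precedes it below -/
import Mathlib

section
/- Let q be a power of a prime p and let k = (q−1)ℓ with ℓ an integer satisfying q/p < ℓ ≤ 2q/p. Then in K̂ = F_q((T^{-1})), ∑_{P ∈ P_1} G_p(1/P^k) = ℓ · (T^q − T)^{q+1} / ((T^{q²} − T^q)(T^{q²} − T)), where ℓ is reduced modulo p. -/
/-!
Write `q = |F|`, `k = (q - 1) ℓ` and `ζ(s) = ∑ 1 / a ^ s`, the sum being over the monic `a`. The
identity is obtained by comparing two computations of `ζ(k) ^ p` and `ζ(p k)` after lifting from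
characteristic `p` to characteristic `p ^ 2`; in characteristic `p` itself they coincide.

*Euler products.* Let `A = F⟦T⁻¹⟧ / (T ^ (-N))`, in which `1 / a` vanishes once `deg a ≥ N`, so that
all sums and products become finite, and replace each `1 / a` by its Teichmüller representative in
the length-two Witt vectors `W₂(A)` (`exists_lift`). There `p ^ 2 = 0`, and as
`1 - U ^ p = (1 - U) ^ p (1 + p G_p(U))`, comparing Euler products (`euler_product`) yields
`ζ(k) ^ p = ζ(p k) (1 + p ∑_P G_p(1 / P ^ k))`.

*Power sums.* Both zeta values are power sums of the roots of
`f(Z) = ∏_a (1 - Z / a ^ (q - 1))`. Up to `Z ^ (2 q)` the reduction of `f` to `A` is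
`1 + d₁ Z + d₂ Z ^ (q + 1)`, because `∏_{deg a < N} (X - a)` is a `q`-linear polynomial
(`ePoly_isLin`, `fPoly_coeff_eq_zero`). The logarithmic derivative of the lift of `f` then gives
`ζ(k) ^ p - ζ(p k) = p ℓ d₂ (-d₁) ^ (p ℓ - q - 1)` (`power_sums`): the unknown error terms of the
lift are killed by `p` and enter only through a coefficient multiplied by `p ℓ`. The hypothesis
`q < p ℓ ≤ 2 q` is what makes exactly these terms appear. Multiplication by `p` on `W₂(A)`
determines `x ^ p`, where `x` is the reduction to `A`, so that
`((-d₁) ^ (p ℓ) ∑_P G_p(1 / P ^ k) - ℓ d₂ (-d₁) ^ (p ℓ - q - 1)) ^ p = 0` in `A` (`core_identity`).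

*The ratio of `d₂` and `d₁ ^ (q + 1)`.* The recursion for `∏_{deg a < N} (X - a)` under `X ↦ T X`
relates `d₁` and `d₂` for consecutive values of `N` (`fPoly_rec`). As `N → ∞` this forces
`d₂ / d₁ ^ (q + 1) → (T ^ q - T) / (T ^ (q ^ 2) - T)` (`fInt_limit`). Taking `N = p M` and extracting
`p`-th roots of the divisibility in `F⟦T⁻¹⟧` gives the partial sums modulo `T ^ (-M)`
(`sum_gamma`), hence convergence to `ℓ (T ^ q - T) / (T ^ (q ^ 2) - T)`, which is the stated value.
-/


open Polynomial

/-- The element `T` inside the field of formal Laurent series in `T⁻¹`. -/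
noncomputable def TT (F : Type) [Field F] : LaurentSeries F := HahnSeries.single (-1) 1

/-- The embedding of `F[T]` into `K̂ = F((T⁻¹))`. -/
noncomputable def polyEmb (F : Type) [Field F] : Polynomial F →+* LaurentSeries F :=
  Polynomial.eval₂RingHom HahnSeries.C (TT F)

/-- The numerator of `G_p`: the integer polynomial `((1 - Uᵖ) - (1 - U)ᵖ)/p`. -/
noncomputable def gpNum (p : ℕ) : Polynomial ℤ :=
  Polynomial.sum ((1 - Polynomial.X ^ p) - (1 - Polynomial.X) ^ p)
    fun n a => Polynomial.C (a / (p : ℤ)) * Polynomial.X ^ n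

/-- The rational function `G_p(u) = ((1 - uᵖ) - (1 - u)ᵖ)/(p (1 - u)ᵖ)`, with the
numerator divided by `p` over `ℤ` and reduced into the field `L`. -/
noncomputable def Gp {L : Type*} [Field L] (p : ℕ) (u : L) : L :=
  (Polynomial.aeval u (gpNum p)) / (1 - u) ^ p

/-! ### Logarithmic derivatives and power sums -/

section LogDeriv

variable {B : Type*} [CommRing B]

/-- The logarithmic derivative `f' / f` of a power series with constant coefficient `1`. -/
noncomputable def dlog (f : PowerSeries B) : PowerSeries B :=
  PowerSeries.derivative B f * PowerSeries.invOfUnit f 1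

theorem dlog_eq {f : PowerSeries B} (hf : PowerSeries.constantCoeff f = 1) (g : PowerSeries B)
    (h : PowerSeries.derivative B f = f * g) : dlog f = g := by
  have h1 : f * PowerSeries.invOfUnit f 1 = 1 := PowerSeries.mul_invOfUnit f 1 (by simpa using hf)
  rw [dlog, h]
  linear_combination g * h1

theorem mul_dlog {f : PowerSeries B} (hf : PowerSeries.constantCoeff f = 1) :
    f * dlog f = PowerSeries.derivative B f := by
  have h1 : f * PowerSeries.invOfUnit f 1 = 1 := PowerSeries.mul_invOfUnit f 1 (by simpa using hf)
  rw [dlog]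
  linear_combination (PowerSeries.derivative B f) * h1

theorem dlog_mul {f g : PowerSeries B} (hf : PowerSeries.constantCoeff f = 1)
    (hg : PowerSeries.constantCoeff g = 1) : dlog (f * g) = dlog f + dlog g := by
  apply dlog_eq (by simp [hf, hg])
  rw [Derivation.leibniz, ← mul_dlog hf, ← mul_dlog hg]
  simp only [smul_eq_mul]
  ring

theorem dlog_prod {ι : Type*} (s : Finset ι) (f : ι → PowerSeries B)
    (hf : ∀ i ∈ s, PowerSeries.constantCoeff (f i) = 1) :
    dlog (∏ i ∈ s, f i) = ∑ i ∈ s, dlog (f i) := by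
  classical
  induction s using Finset.induction_on with
  | empty => simpa using dlog_eq (f := (1 : PowerSeries B)) (by simp) 0 (by simp)
  | insert a s ha ih =>
    rw [Finset.prod_insert ha, Finset.sum_insert ha, dlog_mul, ih]
    · exact fun i hi => hf i (Finset.mem_insert_of_mem hi)
    · exact hf a (Finset.mem_insert_self a s)
    · rw [map_prod]
      exact Finset.prod_eq_one fun i hi => hf i (Finset.mem_insert_of_mem hi)

theorem one_add_mul_geom (c : B) :
    (1 + PowerSeries.C c * PowerSeries.X) * PowerSeries.mk (fun n => (-c) ^ n) = 1 := by
  ext n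
  rw [add_mul, one_mul, mul_assoc, map_add, PowerSeries.coeff_C_mul]
  cases n with
  | zero => simp
  | succ n =>
    rw [PowerSeries.coeff_succ_X_mul]
    simp [PowerSeries.coeff_one, pow_succ]
    ring

theorem coeff_dlog_linear (c : B) (n : ℕ) :
    PowerSeries.coeff n (dlog (1 + PowerSeries.C c * PowerSeries.X)) = c * (-c) ^ n := by
  rw [dlog_eq (g := PowerSeries.C c * PowerSeries.mk (fun n => (-c) ^ n)) (by simp)]
  · simp
  · rw [mul_left_comm, one_add_mul_geom]
    simp [Derivation.leibniz]

/-- If all coefficients of `ε` of index at most `N` lie in an ideal of square zero, then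
`(1 + ε)' / (1 + ε)` agrees with `ε'` below degree `N`. -/
theorem coeff_dlog_of_mem {I : Ideal B} (hI : ∀ x ∈ I, ∀ y ∈ I, x * y = 0) {N : ℕ}
    {ε : PowerSeries B} (h0 : PowerSeries.constantCoeff ε = 0)
    (hε : ∀ n ≤ N, PowerSeries.coeff n ε ∈ I) {n : ℕ} (hn : n < N) :
    PowerSeries.coeff n (dlog (1 + ε)) = PowerSeries.coeff (n + 1) ε * (n + 1) ∧
      PowerSeries.coeff n (dlog (1 + ε)) ∈ I := by
  have hmem : ∀ m < N, PowerSeries.coeff m (dlog (1 + ε)) ∈ I := by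
    intro m hm
    rw [dlog, PowerSeries.coeff_mul]
    refine Ideal.sum_mem _ fun x hx => Ideal.mul_mem_right _ _ ?_
    have := Finset.HasAntidiagonal.mem_antidiagonal.1 hx
    rw [PowerSeries.coeff_derivative, map_add, PowerSeries.coeff_one, if_neg (by omega), zero_add]
    exact Ideal.mul_mem_right _ _ (hε _ (by omega))
  refine ⟨?_, hmem n hn⟩
  have h := congrArg (PowerSeries.coeff n) (mul_dlog (f := 1 + ε) (by simp [h0]))
  have h2 : PowerSeries.coeff n (ε * dlog (1 + ε)) = 0 := by
    rw [PowerSeries.coeff_mul]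
    refine Finset.sum_eq_zero fun x hx => ?_
    have := Finset.HasAntidiagonal.mem_antidiagonal.1 hx
    exact hI _ (hε _ (by omega)) _ (hmem _ (by omega))
  rw [add_mul, one_mul, map_add, h2, add_zero, PowerSeries.coeff_derivative, map_add,
    PowerSeries.coeff_one, if_neg (by omega), zero_add] at h
  exact h

/-- Truncation order bounds: if `ε` is divisible by `X ^ (M + 1)`, then `(1 + ε)' / (1 + ε)`
agrees with `ε'` below degree `2 M + 1`. -/
theorem coeff_dlog_of_dvd {M : ℕ} {η : PowerSeries B} (n : ℕ) (hn : n < 2 * M + 1) :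
    PowerSeries.coeff n (dlog (1 + PowerSeries.X ^ (M + 1) * η)) =
      PowerSeries.coeff (n + 1) (PowerSeries.X ^ (M + 1) * η) * ((n : B) + 1) := by
  set ε := PowerSeries.X ^ (M + 1) * η with hε
  have hd : PowerSeries.X ^ M ∣ dlog (1 + ε) := by
    rw [dlog]
    refine Dvd.dvd.mul_right ?_ _
    rw [map_add, PowerSeries.derivative_one, zero_add, hε, Derivation.leibniz,
      PowerSeries.derivative_pow]
    refine dvd_add ?_ ?_
    · exact Dvd.dvd.mul_right (pow_dvd_pow _ (by omega)) _
    · exact ⟨η * ((M + 1 : ℕ) * 1), by simp; ring⟩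
  obtain ⟨r, hr⟩ := hd
  have h := congrArg (PowerSeries.coeff n) (mul_dlog (f := 1 + ε) (by simp [hε]))
  have h2 : PowerSeries.coeff n (ε * dlog (1 + ε)) = 0 := by
    rw [hr, hε, show PowerSeries.X ^ (M + 1) * η * (PowerSeries.X ^ M * r)
      = PowerSeries.X ^ (2 * M + 1) * (η * r) by ring, PowerSeries.coeff_X_pow_mul']
    rw [if_neg (by omega)]
  rw [add_mul, one_mul, map_add, h2, add_zero, PowerSeries.coeff_derivative, map_add,
    PowerSeries.coeff_one, if_neg (by omega), zero_add] at h
  exact h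

/-- Power sums of the `u a` in terms of the coefficients of `f = ∏ (1 - u a Z)`, when `f` is
congruent to `1 + δ₁ Z + δ₂ Z ^ (q + 1)` modulo a square-zero ideal killed by `p`, up to degree
`2 q`.  The power sum of index `p ℓ` is then known exactly because the perturbation enters its
value through a derivative coefficient, hence multiplied by `p ℓ`. -/
theorem power_sums {I : Ideal B} (hI : ∀ x ∈ I, ∀ y ∈ I, x * y = 0) {p q ℓ : ℕ}
    (hp : ∀ x ∈ I, (p : B) * x = 0) {ι : Type*} (s : Finset ι) (u : ι → B)
    (f : PowerSeries B) (hf : f = ∏ i ∈ s, (1 - PowerSeries.C (u i) * PowerSeries.X))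
    (hc : ∀ j, 2 ≤ j → j ≤ 2 * q → j ≠ q + 1 → PowerSeries.coeff j f ∈ I)
    (hℓ : 1 ≤ ℓ) (hℓq : ℓ ≤ q) (h1 : q + 1 ≤ p * ℓ) (h2 : p * ℓ ≤ 2 * q) :
    ∑ i ∈ s, u i ^ (p * ℓ) = (-PowerSeries.coeff 1 f) ^ (p * ℓ) -
        (p * ℓ : ℕ) * PowerSeries.coeff (q + 1) f *
          (-PowerSeries.coeff 1 f) ^ (p * ℓ - q - 1) ∧
      (∑ i ∈ s, u i ^ ℓ - (-PowerSeries.coeff 1 f) ^ ℓ) ∈ I := by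
  set δ₁ := PowerSeries.coeff 1 f with hδ₁
  set δ₂ := PowerSeries.coeff (q + 1) f with hδ₂
  set b : PowerSeries B := 1 + PowerSeries.C δ₁ * PowerSeries.X with hb
  set w : PowerSeries B := PowerSeries.mk (fun n => (-δ₁) ^ n) with hw
  have hbw : b * w = 1 := one_add_mul_geom δ₁
  set η : PowerSeries B := PowerSeries.C δ₂ * w with hη
  set g₁ : PowerSeries B := 1 + PowerSeries.X ^ (q + 1) * η with hg₁
  have hbg : b * g₁ = b + PowerSeries.C δ₂ * PowerSeries.X ^ (q + 1) := by
    rw [hg₁, hη]; linear_combination (PowerSeries.C δ₂ * PowerSeries.X ^ (q + 1)) * hbw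
  have hf0 : PowerSeries.constantCoeff f = 1 := by
    rw [hf, map_prod]; exact Finset.prod_eq_one fun i _ => by simp
  have hb0 : PowerSeries.constantCoeff b = 1 := by simp [hb]
  have hg₁0 : PowerSeries.constantCoeff g₁ = 1 := by simp [hg₁]
  set v := PowerSeries.invOfUnit (b * g₁) 1 with hv
  have hv1 : (b * g₁) * v = 1 := PowerSeries.mul_invOfUnit _ 1 (by simp [hb0, hg₁0])
  set ε : PowerSeries B := (f - b * g₁) * v with hε
  have hfac : f = b * g₁ * (1 + ε) := by
    rw [hε]; linear_combination (b * g₁ - f) * hv1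
  have hε0 : PowerSeries.constantCoeff ε = 0 := by simp [hε, hf0, hb0, hg₁0]
  have hεI : ∀ n ≤ 2 * q, PowerSeries.coeff n ε ∈ I := by
    intro n hn
    rw [hε, PowerSeries.coeff_mul]
    refine Ideal.sum_mem _ fun x hx => Ideal.mul_mem_right _ _ ?_
    have hx := Finset.HasAntidiagonal.mem_antidiagonal.1 hx
    have hx1 : x.1 ≤ 2 * q := by omega
    generalize x.1 = j at hx1
    rw [hbg, hb, map_sub, map_add, map_add, PowerSeries.coeff_C_mul, PowerSeries.coeff_C_mul,
      PowerSeries.coeff_one, PowerSeries.coeff_X, PowerSeries.coeff_X_pow]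
    rcases Nat.lt_or_ge j 2 with h | h
    · interval_cases j
      · rw [if_neg (by omega : ¬ (0 = q + 1))]
        simp [hf0]
      · rw [if_neg (by omega : ¬ (1 = q + 1))]
        simp [hδ₁]
    · by_cases hjq : j = q + 1
      · rw [if_pos hjq, if_neg (by omega), if_neg (by omega), hjq]
        simp [hδ₂]
      · rw [if_neg hjq, if_neg (by omega), if_neg (by omega)]
        simpa using hc j h hx1 hjq
  have hdl : ∀ n, -∑ i ∈ s, u i ^ (n + 1) = -(-δ₁) ^ (n + 1) + PowerSeries.coeff n (dlog g₁)
      + PowerSeries.coeff n (dlog (1 + ε)) := by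
    intro n
    have e1 : PowerSeries.coeff n (dlog f) = -∑ i ∈ s, u i ^ (n + 1) := by
      rw [hf, dlog_prod _ _ (fun i _ => by simp), map_sum, ← Finset.sum_neg_distrib]
      refine Finset.sum_congr rfl fun i _ => ?_
      have := coeff_dlog_linear (-u i) n
      rw [neg_neg, map_neg, neg_mul, ← sub_eq_add_neg] at this
      rw [this]; ring
    rw [← e1, hfac, dlog_mul (by simp [hb0, hg₁0]) (by simp [hε0]), dlog_mul hb0 hg₁0, map_add,
      map_add, hb, coeff_dlog_linear]
    ring
  constructor
  · obtain ⟨m, hm⟩ : ∃ m, p * ℓ = m + 1 := ⟨p * ℓ - 1, by omega⟩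
    have h3 := hdl m
    rw [hg₁, coeff_dlog_of_dvd (M := q) m (by omega),
      (coeff_dlog_of_mem hI hε0 hεI (by omega : m < 2 * q)).1] at h3
    have hpl : ((m : B) + 1) = (p : B) * ℓ := by
      have := congrArg (Nat.cast : ℕ → B) hm
      push_cast at this
      exact this.symm
    have hz : PowerSeries.coeff (m + 1) ε * ((m : B) + 1) = 0 := by
      rw [hpl]
      linear_combination (ℓ : B) * hp _ (hεI (m + 1) (by omega))
    rw [hz, PowerSeries.coeff_X_pow_mul', if_pos (by omega), hη, PowerSeries.coeff_C_mul, hw,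
      PowerSeries.coeff_mk, hpl, ← hm] at h3
    rw [Nat.sub_sub]
    push_cast
    linear_combination -h3
  · obtain ⟨m, rfl⟩ : ∃ m, ℓ = m + 1 := ⟨ℓ - 1, by omega⟩
    have h3 := hdl m
    rw [hg₁, coeff_dlog_of_dvd (M := q) m (by omega), PowerSeries.coeff_X_pow_mul',
      if_neg (by omega), zero_mul, add_zero] at h3
    have h4 := (coeff_dlog_of_mem hI hε0 hεI (by omega : m < 2 * q)).2
    have : ∑ i ∈ s, u i ^ (m + 1) - (-δ₁) ^ (m + 1) = -PowerSeries.coeff m (dlog (1 + ε)) := by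
      linear_combination -h3
    rw [this]
    exact neg_mem h4

end LogDeriv

/-! ### Lifting to Witt vectors of length two -/

section Lift

/-- The truncated Witt vectors `W₂(A)` of a ring `A` of characteristic `p`, presented as a ring
`B` with a reduction map `φ : B → A` whose kernel has square zero and is killed by `p`, and with
the multiplicative (Teichmüller) section `τ`. Multiplication by `p` on `B` remembers `φ x ^ p`. -/
theorem exists_lift (p : ℕ) [Fact p.Prime] (A : Type) [CommRing A] [CharP A p] :
    ∃ (B : Type) (_ : CommRing B) (φ : B →+* A) (τ : A →* B), (∀ a, φ (τ a) = a) ∧ τ 0 = 0 ∧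
      (∀ x y, φ x = 0 → φ y = 0 → x * y = 0) ∧ (∀ x, φ x = 0 → (p : B) * x = 0) ∧
      ∀ x, (p : B) * x = 0 → φ x ^ p = 0 := by
  set J := RingHom.ker (WittVector.truncate (p := p) (R := A) 2) with hJ
  have memJ : ∀ x : WittVector p A, x ∈ J ↔ x.coeff 0 = 0 ∧ x.coeff 1 = 0 := by
    intro x
    rw [hJ, WittVector.mem_ker_truncate]
    constructor
    · exact fun h => ⟨h 0 (by norm_num), h 1 (by norm_num)⟩
    · intro h i hi
      interval_cases i
      exacts [h.1, h.2]
  have hV : ∀ x : WittVector p A, x.coeff 0 = 0 → ∃ y, x = WittVector.verschiebung y := by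
    intro x hx
    refine ⟨x.shift 1, ?_⟩
    rw [WittVector.verschiebung_shift x 0 fun i hi => by interval_cases i; exact hx]
    ext n
    rw [WittVector.shift_coeff, zero_add]
  let φ : (WittVector p A ⧸ J) →+* A := Ideal.Quotient.lift J WittVector.constantCoeff
    fun x hx => ((memJ x).1 hx).1
  have hφ : ∀ x, φ (Ideal.Quotient.mk J x) = x.coeff 0 := fun x => rfl
  refine ⟨WittVector p A ⧸ J, inferInstance, φ,
    (Ideal.Quotient.mk J : WittVector p A →* _).comp (WittVector.teichmuller p), ?_, ?_, ?_, ?_, ?_⟩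
  · intro a
    exact WittVector.teichmuller_coeff_zero p a
  · simp
  · intro x y hx hy
    obtain ⟨x, rfl⟩ := Ideal.Quotient.mk_surjective x
    obtain ⟨y, rfl⟩ := Ideal.Quotient.mk_surjective y
    rw [hφ] at hx hy
    obtain ⟨x, rfl⟩ := hV x hx
    obtain ⟨y, rfl⟩ := hV y hy
    rw [← map_mul, Ideal.Quotient.eq_zero_iff_mem, memJ, ← WittVector.verschiebung_mul_frobenius,
      WittVector.frobenius_verschiebung, ← mul_assoc]
    exact ⟨WittVector.verschiebung_coeff_zero _,
      (WittVector.verschiebung_coeff_succ _ 0).trans (WittVector.mul_charP_coeff_zero _)⟩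
  · intro x hx
    obtain ⟨x, rfl⟩ := Ideal.Quotient.mk_surjective x
    rw [hφ] at hx
    rw [← map_natCast (Ideal.Quotient.mk J), ← map_mul, Ideal.Quotient.eq_zero_iff_mem, memJ,
      mul_comm]
    refine ⟨WittVector.mul_charP_coeff_zero _, ?_⟩
    rw [show (1 : ℕ) = 0 + 1 from rfl, WittVector.mul_charP_coeff_succ, hx,
      zero_pow (Nat.Prime.ne_zero Fact.out)]
  · intro x hx
    obtain ⟨x, rfl⟩ := Ideal.Quotient.mk_surjective x
    rw [← map_natCast (Ideal.Quotient.mk J), ← map_mul, Ideal.Quotient.eq_zero_iff_mem, memJ,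
      mul_comm] at hx
    rw [hφ, ← WittVector.mul_charP_coeff_succ, zero_add]
    exact hx.2

end Lift

/-! ### The numerator of `G_p` -/

/-- The divisions by `p` in the definition of `gpNum` are exact. -/
theorem C_mul_gpNum (p : ℕ) (hp : p.Prime) :
    C (p : ℤ) * gpNum p = (1 - X ^ p) - (1 - X) ^ p := by
  have : Fact p.Prime := ⟨hp⟩
  set g : ℤ[X] := (1 - X ^ p) - (1 - X) ^ p with hg
  have hdvd : ∀ n, (p : ℤ) ∣ g.coeff n := by
    intro n
    rw [← ZMod.intCast_zmod_eq_zero_iff_dvd, ← eq_intCast (Int.castRingHom (ZMod p)), ← coeff_map]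
    have : g.map (Int.castRingHom (ZMod p)) = 0 := by
      simp [hg, sub_pow_char]
    rw [this, coeff_zero]
  ext n
  have hn : (gpNum p).coeff n = g.coeff n / p := by
    rw [gpNum, ← hg, Polynomial.sum, finsetSum_coeff]
    simp only [coeff_C_mul_X_pow]
    rw [Finset.sum_ite_eq]
    split_ifs with h
    · rfl
    · rw [notMem_support_iff.1 h]; simp
  rw [coeff_C_mul, hn, Int.mul_ediv_cancel' (hdvd n)]

theorem gpNum_spec {B : Type*} [CommRing B] (p : ℕ) (hp : p.Prime) (u : B) :
    (p : B) * aeval u (gpNum p) = (1 - u ^ p) - (1 - u) ^ p := by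
  have := congrArg (aeval u) (C_mul_gpNum p hp)
  simpa using this

theorem X_dvd_gpNum (p : ℕ) (hp : p.Prime) : X ∣ gpNum p := by
  rw [X_dvd_iff]
  have h := congrArg (fun f => coeff f 0) (C_mul_gpNum p hp)
  have : coeff ((1 - X ^ p - (1 - X) ^ p : ℤ[X])) 0 = 0 := by
    rw [coeff_zero_eq_eval_zero]; simp [hp.ne_zero]
  simp only [this, coeff_C_mul] at h
  exact (mul_eq_zero.1 h).resolve_left (by exact_mod_cast hp.ne_zero)

/-! ### Finite sets of polynomials and Euler products -/

section Polys

theorem horner_injective {F : Type} [Field F] :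
    Function.Injective fun x : F × F[X] => X * x.2 + C x.1 := by
  rintro ⟨c, b⟩ ⟨c', b'⟩ h
  have h0 := congrArg (fun f => coeff f 0) h
  simp at h0
  subst h0
  have h1 : b = b' := mul_left_cancel₀ X_ne_zero (add_right_cancel h)
  rw [h1]

variable (F : Type) [Field F] [Fintype F]

open Classical in
/-- The finite set of polynomials of degree `< d`, built by Horner's rule `b ↦ T b + c`. -/
noncomputable def polys : ℕ → Finset F[X]
  | 0 => {0}
  | d + 1 => (Finset.univ ×ˢ polys d).image fun x : F × F[X] => X * x.2 + C x.1

open Classical in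
/-- The monic polynomials of degree `< d`. -/
noncomputable def monics (d : ℕ) : Finset F[X] := (polys F d).filter Monic

open Classical in
/-- The monic irreducible polynomials of degree `< d`. -/
noncomputable def primes (d : ℕ) : Finset F[X] := (monics F d).filter Irreducible

variable {F}

theorem mem_polys {d : ℕ} {a : F[X]} : a ∈ polys F d ↔ ∀ m, d ≤ m → a.coeff m = 0 := by
  induction d generalizing a with
  | zero =>
    simp only [polys, Finset.mem_singleton]
    constructor
    · rintro rfl; simp
    · intro h; ext m; simpa using h m (Nat.zero_le m)
  | succ d ih =>
    simp only [polys, Finset.mem_image, Finset.mem_product, Finset.mem_univ, true_and]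
    constructor
    · rintro ⟨⟨c, b⟩, hb, rfl⟩ m hm
      obtain ⟨m, rfl⟩ : ∃ k, m = k + 1 := ⟨m - 1, by omega⟩
      simpa [coeff_X_mul, coeff_C] using ih.1 hb m (by omega)
    · intro h
      refine ⟨(a.coeff 0, divX a), ih.2 fun m hm => ?_, X_mul_divX_add a⟩
      rw [coeff_divX]
      exact h _ (by omega)

theorem mem_monics {d : ℕ} {a : F[X]} : a ∈ monics F d ↔ a.Monic ∧ a.natDegree < d := by
  classical
  rw [monics, Finset.mem_filter, mem_polys, and_comm]
  refine and_congr_right fun h => ?_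
  rw [natDegree_lt_iff_degree_lt h.ne_zero, degree_lt_iff_coeff_zero]

theorem mem_primes {d : ℕ} {a : F[X]} :
    a ∈ primes F d ↔ a.Monic ∧ a.natDegree < d ∧ Irreducible a := by
  classical
  rw [primes, Finset.mem_filter, mem_monics, and_assoc]

variable {B : Type*} [CommRing B]

open Classical in
/-- The sieve behind the Euler product: the factors at `P ∈ S` remove the multiples of `P`. -/
theorem euler_aux {N : ℕ} (U : F[X] →* B)
    (hU : ∀ a : F[X], a.Monic → N ≤ a.natDegree → U a = 0) (S : Finset F[X])
    (hS : ∀ P ∈ S, P.Monic ∧ Irreducible P) :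
    (∑ a ∈ monics F N, U a) * ∏ P ∈ S, (1 - U P) =
      ∑ a ∈ (monics F N).filter (fun a => ∀ P ∈ S, ¬ P ∣ a), U a := by
  induction S using Finset.induction_on with
  | empty => simp
  | insert Q S hQ ih =>
    have hS' : ∀ P ∈ S, P.Monic ∧ Irreducible P := fun P hP => hS P (Finset.mem_insert_of_mem hP)
    obtain ⟨hQm, hQi⟩ := hS Q (Finset.mem_insert_self Q S)
    rw [Finset.prod_insert hQ, mul_left_comm, ih hS', sub_mul, one_mul]
    set C₀ := (monics F N).filter (fun a => ∀ P ∈ S, ¬ P ∣ a) with hC₀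
    have hsplit := Finset.sum_filter_add_sum_filter_not C₀ (fun a => Q ∣ a) (fun a => U a)
    have h1 : (monics F N).filter (fun a => ∀ P ∈ insert Q S, ¬ P ∣ a)
        = C₀.filter (fun a => ¬ Q ∣ a) := by
      ext a
      simp only [hC₀, Finset.mem_filter, Finset.mem_insert, forall_eq_or_imp]
      tauto
    have h2 : U Q * ∑ a ∈ C₀, U a = ∑ a ∈ C₀.filter (fun a => Q ∣ a), U a := by
      rw [Finset.mul_sum]
      have h3 : ∑ a ∈ C₀, U Q * U a
          = ∑ a ∈ C₀.filter (fun a => (Q * a).natDegree < N), U Q * U a := by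
        refine (Finset.sum_subset (Finset.filter_subset _ _) fun a ha hna => ?_).symm
        have ham : a.Monic := (mem_monics.1 (Finset.mem_filter.1 ha).1).1
        rw [← map_mul]
        refine hU _ (hQm.mul ham) ?_
        by_contra hlt
        exact hna (Finset.mem_filter.2 ⟨ha, by omega⟩)
      rw [h3]
      refine Finset.sum_bij (fun a _ => Q * a) ?_ ?_ ?_ ?_
      · intro a ha
        obtain ⟨ha, hlt⟩ := Finset.mem_filter.1 ha
        obtain ⟨ha, hcop⟩ := Finset.mem_filter.1 ha
        refine Finset.mem_filter.2 ⟨Finset.mem_filter.2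
          ⟨mem_monics.2 ⟨hQm.mul (mem_monics.1 ha).1, hlt⟩, fun P hP hdvd => ?_⟩,
          dvd_mul_right Q a⟩
        obtain ⟨hPm, hPi⟩ := hS' P hP
        rcases hPi.prime.dvd_or_dvd hdvd with h | h
        · have := eq_of_monic_of_associated hPm hQm (hPi.associated_of_dvd hQi h)
          exact hQ (this ▸ hP)
        · exact hcop P hP h
      · intro a _ b _ h
        exact mul_left_cancel₀ hQm.ne_zero h
      · intro b hb
        obtain ⟨hb, a, rfl⟩ := Finset.mem_filter.1 hb
        obtain ⟨hb, hcop⟩ := Finset.mem_filter.1 hb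
        obtain ⟨hbm, hbd⟩ := mem_monics.1 hb
        have ham : a.Monic := hQm.of_mul_monic_left hbm
        have hdeg := hQm.natDegree_mul ham
        exact ⟨a, Finset.mem_filter.2 ⟨Finset.mem_filter.2 ⟨mem_monics.2 ⟨ham, by omega⟩,
          fun P hP h => hcop P hP (Dvd.dvd.mul_left h Q)⟩, hbd⟩, rfl⟩
      · intro a _
        rw [map_mul]
    rw [h1, h2, ← hsplit]
    ring

/-- The Euler product for a multiplicative function vanishing on monic polynomials of degree at
least `N`. -/
theorem euler_product {N : ℕ} (hN : 1 ≤ N) (U : F[X] →* B)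
    (hU : ∀ a : F[X], a.Monic → N ≤ a.natDegree → U a = 0) :
    (∑ a ∈ monics F N, U a) * ∏ P ∈ primes F N, (1 - U P) = 1 := by
  classical
  rw [euler_aux U hU _ fun P hP => ⟨(mem_primes.1 hP).1, (mem_primes.1 hP).2.2⟩]
  rw [show (monics F N).filter (fun a => ∀ P ∈ primes F N, ¬ P ∣ a) = {1} from ?_]
  · simp
  ext a
  rw [Finset.mem_filter, Finset.mem_singleton]
  constructor
  · rintro ⟨ha, hcop⟩
    obtain ⟨ham, had⟩ := mem_monics.1 ha
    by_contra hne
    obtain ⟨P, hPm, hPi, hPa⟩ := exists_monic_irreducible_factor a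
      fun hu => hne (ham.isUnit_iff.1 hu)
    exact hcop P (mem_primes.2 ⟨hPm, (natDegree_le_of_dvd hPa ham.ne_zero).trans_lt had, hPi⟩) hPa
  · rintro rfl
    refine ⟨mem_monics.2 ⟨monic_one, by simpa using Nat.pos_of_ne_zero (by omega)⟩, fun P hP h => ?_⟩
    exact (mem_primes.1 hP).2.2.not_isUnit (isUnit_of_dvd_one h)

end Polys

/-! ### The identity modulo a power of `T⁻¹` -/

section Core

theorem prod_one_add_mul {B ι : Type*} [CommRing B] (c : B) (hc : c * c = 0) (s : Finset ι)
    (g : ι → B) : ∏ i ∈ s, (1 + c * g i) = 1 + c * ∑ i ∈ s, g i := by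
  classical
  induction s using Finset.induction_on with
  | empty => simp
  | insert a s ha ih =>
    rw [Finset.prod_insert ha, Finset.sum_insert ha, ih]
    linear_combination (g a * ∑ i ∈ s, g i) * hc

/-- Elements that agree modulo a square-zero ideal killed by `p` have the same `p`-th power. -/
theorem pow_eq_pow_of_sub {B : Type*} [CommRing B] {p : ℕ} {x y : B}
    (h1 : (p : B) * (x - y) = 0) (h2 : (x - y) * (x - y) = 0) : x ^ p = y ^ p := by
  obtain ⟨k, hk⟩ := Polynomial.powAddExpansion y (x - y) p
  rw [add_sub_cancel] at hk
  rw [hk]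
  linear_combination (y ^ (p - 1)) * h1 + k * h2

/-- The comparison of Euler products and power sums. Here `y a` plays the role of `1 / a`, read in a
ring of characteristic `p` where it vanishes for `a` of degree at least `N`, and `d₁`, `d₂` are the
coefficients of `Z` and `Z ^ (q + 1)` in `f = ∏ (1 - y a ^ (q - 1) Z)`.

After lifting to `W₂(A)`, the Euler products of `ζ(k)` and `ζ(p k)` give
`ζ(k) ^ p = ζ(p k) (1 + p ∑ G_p)`, while the power sums of `f` give
`ζ(k) ^ p - ζ(p k) = p ℓ d₂ (-d₁) ^ (p ℓ - q - 1)`. -/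
theorem core_identity {F : Type} [Field F] [Fintype F] {A : Type} [CommRing A] (p : ℕ)
    [hpf : Fact p.Prime] [CharP A p] {N q ℓ : ℕ} (hN : 1 ≤ N) (hq : 2 ≤ q) (hℓ : 1 ≤ ℓ)
    (hℓq : ℓ ≤ q) (h1 : q + 1 ≤ p * ℓ) (h2 : p * ℓ ≤ 2 * q) (y : F[X] →* A)
    (hy : ∀ a : F[X], a.Monic → N ≤ a.natDegree → y a = 0) (f : PowerSeries A)
    (hf : f = ∏ a ∈ monics F N, (1 - PowerSeries.C (y a ^ (q - 1)) * PowerSeries.X))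
    (hc : ∀ j, 2 ≤ j → j ≤ 2 * q → j ≠ q + 1 → PowerSeries.coeff j f = 0) (G : F[X] → A)
    (hG : ∀ P ∈ primes F N,
      G P * (1 - y P ^ ((q - 1) * ℓ)) ^ p = aeval (y P ^ ((q - 1) * ℓ)) (gpNum p)) :
    ((-PowerSeries.coeff 1 f) ^ (p * ℓ) * ∑ P ∈ primes F N, G P -
      ℓ * PowerSeries.coeff (q + 1) f * (-PowerSeries.coeff 1 f) ^ (p * ℓ - q - 1)) ^ p = 0 := by
  obtain ⟨B, _, φ, τ, hτ, hτ0, hI2, hpI, hpx⟩ := exists_lift p A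
  have hprime : p.Prime := hpf.out
  have hφp : φ (p : B) = 0 := by rw [map_natCast, CharP.cast_eq_zero]
  have hpp : (p : B) * p = 0 := hpI _ hφp
  set Y : F[X] →* B := τ.comp y with hY
  have hφY : ∀ a, φ (Y a) = y a := fun a => hτ _
  set k := (q - 1) * ℓ with hk
  have hk0 : k ≠ 0 := Nat.mul_ne_zero (by omega) (by omega)
  have hkp : (q - 1) * (p * ℓ) = k * p := by rw [hk]; ring
  set U : F[X] →* B := (powMonoidHom k).comp Y with hU
  set V : F[X] →* B := (powMonoidHom p).comp U with hV
  have hUa : ∀ a, U a = Y a ^ k := fun a => rfl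
  have hVa : ∀ a, V a = U a ^ p := fun a => rfl
  have hU0 : ∀ a : F[X], a.Monic → N ≤ a.natDegree → U a = 0 := by
    intro a ha hd
    have : Y a = 0 := by
      change τ (y a) = 0
      rw [hy a ha hd, hτ0]
    rw [hUa, this, zero_pow hk0]
  have hV0 : ∀ a : F[X], a.Monic → N ≤ a.natDegree → V a = 0 := by
    intro a ha hd
    rw [hVa, hU0 a ha hd, zero_pow hprime.ne_zero]
  have E1 := euler_product hN U hU0
  have E2 := euler_product hN V hV0
  -- the logarithmic derivative computation in `B⟦Z⟧`
  set fB : PowerSeries B :=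
    ∏ a ∈ monics F N, (1 - PowerSeries.C (Y a ^ (q - 1)) * PowerSeries.X) with hfB
  have hmap : PowerSeries.map φ fB = f := by
    rw [hfB, hf, map_prod]
    refine Finset.prod_congr rfl fun a _ => ?_
    simp [hφY]
  have hcoef : ∀ j, φ (PowerSeries.coeff j fB) = PowerSeries.coeff j f := by
    intro j; rw [← hmap, PowerSeries.coeff_map]
  obtain ⟨S1, S2⟩ := power_sums (I := RingHom.ker φ) (fun x hx z hz => hI2 x z hx hz)
    (fun x hx => hpI x hx) (monics F N) (fun a => Y a ^ (q - 1)) fB hfB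
    (fun j hj1 hj2 hj3 => by rw [RingHom.mem_ker, hcoef]; exact hc j hj1 hj2 hj3) hℓ hℓq h1 h2
  set δ₁ := PowerSeries.coeff 1 fB with hδ₁
  set δ₂ := PowerSeries.coeff (q + 1) fB with hδ₂
  have eV : ∑ a ∈ monics F N, (Y a ^ (q - 1)) ^ (p * ℓ) = ∑ a ∈ monics F N, V a :=
    Finset.sum_congr rfl fun a _ => by rw [hVa, hUa, ← pow_mul, ← pow_mul, hkp]
  have eU : ∑ a ∈ monics F N, (Y a ^ (q - 1)) ^ ℓ = ∑ a ∈ monics F N, U a :=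
    Finset.sum_congr rfl fun a _ => by rw [hUa, ← pow_mul]
  rw [eV] at S1
  rw [eU, RingHom.mem_ker] at S2
  set Z₁ := ∑ a ∈ monics F N, U a with hZ₁
  set Z₂ := ∑ a ∈ monics F N, V a with hZ₂
  have hZp : Z₁ ^ p = (-δ₁) ^ (p * ℓ) := by
    rw [pow_eq_pow_of_sub (hpI _ S2) (hI2 _ _ S2 S2), ← pow_mul, mul_comm]
  -- the Euler factors
  have hunit : ∀ P ∈ primes F N, ∃ v, (1 - U P) * v = 1 := by
    intro P hP
    obtain ⟨r, hr⟩ := Finset.dvd_prod_of_mem (fun P => 1 - U P) hP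
    exact ⟨r * Z₁, by rw [← mul_assoc, ← hr, mul_comm]; exact E1⟩
  choose! v hv using hunit
  set H : F[X] → B := fun P => aeval (U P) (gpNum p) * v P ^ p with hH
  have hfactor : ∏ P ∈ primes F N, (1 - V P)
      = (∏ P ∈ primes F N, (1 - U P)) ^ p * (1 + p * ∑ P ∈ primes F N, H P) := by
    rw [← prod_one_add_mul _ hpp, ← Finset.prod_pow, ← Finset.prod_mul_distrib]
    refine Finset.prod_congr rfl fun P hP => ?_
    have hvp : (1 - U P) ^ p * v P ^ p = 1 := by rw [← mul_pow, hv P hP, one_pow]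
    have hs := gpNum_spec p hprime (U P)
    rw [hVa, hH]
    linear_combination -hs - (p : B) * aeval (U P) (gpNum p) * hvp
  have hZZ : Z₁ ^ p = Z₂ * (1 + p * ∑ P ∈ primes F N, H P) := by
    have e : Z₁ ^ p * (∏ P ∈ primes F N, (1 - U P)) ^ p = 1 := by rw [← mul_pow, E1, one_pow]
    rw [hfactor] at E2
    linear_combination (-Z₁ ^ p) * E2 + Z₂ * (1 + p * ∑ P ∈ primes F N, H P) * e
  have key : (p : B) * (Z₂ * ∑ P ∈ primes F N, H P - ℓ * δ₂ * (-δ₁) ^ (p * ℓ - q - 1)) = 0 := by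
    push_cast at S1
    linear_combination hZp - hZZ - S1
  have hfin := hpx _ key
  have hφZ : φ Z₂ = (-PowerSeries.coeff 1 f) ^ (p * ℓ) := by
    rw [S1, map_sub, map_mul, map_mul, Nat.cast_mul, map_mul, hφp, map_pow, map_neg, hδ₁, hcoef]
    ring
  have hφH : φ (∑ P ∈ primes F N, H P) = ∑ P ∈ primes F N, G P := by
    rw [map_sum]
    refine Finset.sum_congr rfl fun P hP => ?_
    have hUP : φ (U P) = y P ^ k := by rw [hUa, map_pow, hφY]
    have hvφ : (1 - y P ^ k) ^ p * φ (v P) ^ p = 1 := by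
      rw [← mul_pow, ← hUP, ← map_one φ, ← map_sub, ← map_mul, hv P hP, map_one, one_pow]
    have hae : φ (aeval (U P) (gpNum p)) = aeval (y P ^ k) (gpNum p) := by
      rw [← hUP]
      exact (aeval_algHom_apply φ.toIntAlgHom (U P) (gpNum p)).symm
    rw [hH, map_mul, map_pow, hae, ← hG P hP]
    linear_combination (G P) * hvφ
  rw [map_sub, map_mul, map_mul, map_mul, map_pow, map_neg, map_natCast, hφZ, hφH, hδ₁, hδ₂,
    hcoef, hcoef] at hfin
  exact hfin

end Core

/-! ### The polynomial with roots all polynomials of bounded degree -/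

section Linear

/-- The homogeneous form of `∏ (X - c) = X ^ q - X`, the product being over `c` in `F`. -/
theorem prod_sub_algebraMap_mul {F : Type} [Field F] [Fintype F] {S : Type*} [CommRing S]
    [IsDomain S] [Algebra F S] (Y W : S) :
    ∏ c : F, (Y - algebraMap F S c * W) =
      Y ^ Fintype.card F - W ^ (Fintype.card F - 1) * Y := by
  have hq : 1 < Fintype.card F := Fintype.one_lt_card
  by_cases hW : W = 0
  · have : Fintype.card F - 1 ≠ 0 := by omega
    simp [hW, this]
  have hprod : (X ^ Fintype.card F - X : F[X]) = ∏ c : F, (X - C c) := by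
    have hm : (X ^ Fintype.card F - X : F[X]).Monic :=
      monic_X_pow_sub (by rw [degree_X]; exact_mod_cast hq)
    have := prod_multiset_X_sub_C_of_monic_of_roots_card_eq hm (by
      rw [FiniteField.roots_X_pow_card_sub_X, FiniteField.X_pow_card_sub_X_natDegree_eq F hq]
      rfl)
    rw [FiniteField.roots_X_pow_card_sub_X] at this
    exact this.symm
  apply IsFractionRing.injective S (FractionRing S)
  set g := algebraMap S (FractionRing S) with hg
  have hgW : g W ≠ 0 := by
    rwa [Ne, map_eq_zero_iff g (IsFractionRing.injective S (FractionRing S))]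
  have h := congrArg (eval₂ (g.comp (algebraMap F S)) (g Y / g W)) hprod
  rw [eval₂_finsetProd] at h
  simp only [eval₂_sub, eval₂_X, eval₂_C, eval₂_pow] at h
  have h2 : ∀ c : F, g (Y - algebraMap F S c * W)
      = g W * (g Y / g W - (g.comp (algebraMap F S)) c) := by
    intro c
    simp only [map_sub, map_mul, RingHom.comp_apply]
    field_simp
  rw [map_prod, Finset.prod_congr rfl fun c _ => h2 c, Finset.prod_mul_distrib, ← h]
  obtain ⟨r, hr⟩ : ∃ r, Fintype.card F = r + 1 := ⟨Fintype.card F - 1, by omega⟩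
  simp only [Finset.prod_const, Finset.card_univ, map_sub, map_mul, map_pow, hr,
    Nat.add_sub_cancel, div_pow]
  field_simp
  ring

variable {F : Type} [Field F] [Fintype F] {K : Type} [Field K] [Algebra F K]

variable (F) in
theorem sub_pow_card_pow {S : Type*} [CommRing S] [Algebra F S] [Nontrivial S] (x y : S) (i : ℕ) :
    (x - y) ^ Fintype.card F ^ i = x ^ Fintype.card F ^ i - y ^ Fintype.card F ^ i := by
  obtain ⟨p, hp⟩ := CharP.exists F
  obtain ⟨n, hprime, hn⟩ := FiniteField.card F p
  have : Fact p.Prime := ⟨hprime⟩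
  have : CharP S p := charP_of_injective_algebraMap (algebraMap F S).injective p
  rw [hn, ← pow_mul, sub_pow_char_pow]

variable (F) in
theorem coeff_pow_card (f : K[X]) (n : ℕ) :
    (f ^ Fintype.card F).coeff n =
      if Fintype.card F ∣ n then f.coeff (n / Fintype.card F) ^ Fintype.card F else 0 := by
  obtain ⟨p, hp⟩ := CharP.exists F
  obtain ⟨m, hprime, hm⟩ := FiniteField.card F p
  have : Fact p.Prime := ⟨hprime⟩
  have : CharP K p := charP_of_injective_algebraMap (algebraMap F K).injective p
  have : ExpChar K p := ExpChar.prime hprime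
  rw [hm, ← map_iterateFrobenius_expand p, coeff_map, coeff_expand (pow_pos hprime.pos _)]
  split_ifs
  · rw [iterateFrobenius_def]
  · simp

variable (F) in
/-- A polynomial is `q`-linear when only the monomials `X ^ (q ^ i)` occur in it. -/
def IsLin (f : K[X]) : Prop := ∀ n, f.coeff n ≠ 0 → ∃ i, n = Fintype.card F ^ i

/-- Additivity and `F`-homogeneity of a `q`-linear polynomial, at the points `X` and `c u`. -/
theorem IsLin.comp_sub {f : K[X]} (hf : IsLin F f) (c : F) (u : K) :
    f.comp (X - C (algebraMap F K c * u)) = f - C (algebraMap F K c) * C (f.eval u) := by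
  conv_rhs => rw [f.as_sum_support_C_mul_X_pow]
  rw [comp_eq_sum_left, Polynomial.sum_def, eval_finsetSum, map_sum, Finset.mul_sum,
    ← Finset.sum_sub_distrib]
  refine Finset.sum_congr rfl fun n hn => ?_
  obtain ⟨i, rfl⟩ := hf n (mem_support_iff.1 hn)
  rw [sub_pow_card_pow F, ← C_pow, mul_pow, ← map_pow, FiniteField.pow_card_pow]
  simp only [eval_mul, eval_C, eval_pow, eval_X, C_mul, C_pow]
  ring

/-- The polynomial `e_d(X) = ∏ (X - a)` over all `a` of degree `< d`. -/
noncomputable def ePoly (ι : F[X] →ₐ[F] K) (d : ℕ) : K[X] := ∏ a ∈ polys F d, (X - C (ι a))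

/-- The polynomial `∏ (1 - Z / m ^ (q - 1))` over all monic `m` of degree `< d`. -/
noncomputable def fPoly (ι : F[X] →ₐ[F] K) (d : ℕ) : K[X] :=
  ∏ m ∈ monics F d, (1 - C ((ι m)⁻¹ ^ (Fintype.card F - 1)) * X)

/-- Splitting `a = T b + c` by its constant coefficient `c` expresses `e_{d+1}(T X)` through
`e_d(X)`; the product over `c` is evaluated using the `q`-linearity of `e_d`. -/
theorem ePoly_succ {ι : F[X] →ₐ[F] K} (hX : ι X ≠ 0) {d : ℕ} (hd : IsLin F (ePoly ι d)) :
    ∃ κ w : K, (ePoly ι (d + 1)).comp (C (ι X) * X) =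
      C κ * (ePoly ι d ^ Fintype.card F - C w * ePoly ι d) := by
  classical
  set Θ := ι X with hΘ
  refine ⟨(Θ ^ (polys F d).card) ^ Fintype.card F,
    ((ePoly ι d).eval Θ⁻¹) ^ (Fintype.card F - 1), ?_⟩
  have h1 : ePoly ι (d + 1)
      = ∏ c : F, ∏ b ∈ polys F d, (X - C (ι (X * b + C c))) := by
    rw [ePoly, polys, Finset.prod_image fun x _ y _ h => horner_injective h, Finset.prod_product]
  rw [h1, prod_comp]
  have h2 : ∀ c : F, (∏ b ∈ polys F d, (X - C (ι (X * b + C c)))).comp (C Θ * X)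
      = C (Θ ^ (polys F d).card) *
        (ePoly ι d - algebraMap F K[X] c * C ((ePoly ι d).eval Θ⁻¹)) := by
    intro c
    have h3 := hd.comp_sub c Θ⁻¹
    rw [show (algebraMap F K[X]) c = C (algebraMap F K c) from rfl, ← h3, ePoly, prod_comp,
      prod_comp, C_pow, ← Finset.prod_const, ← Finset.prod_mul_distrib]
    refine Finset.prod_congr rfl fun b _ => ?_
    have h4 : ι (C c) = algebraMap F K c := ι.commutes c
    have h5 : C Θ * C Θ⁻¹ = 1 := by rw [← C_mul, mul_inv_cancel₀ hX, C_1]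
    simp only [sub_comp, X_comp, C_comp, map_add, map_mul, h4, ← hΘ, add_comp, mul_comp]
    linear_combination (C ((algebraMap F K) c)) * h5
  rw [Finset.prod_congr rfl fun c _ => h2 c, Finset.prod_mul_distrib, prod_sub_algebraMap_mul]
  simp

theorem ePoly_isLin {ι : F[X] →ₐ[F] K} (hX : ι X ≠ 0) (d : ℕ) : IsLin F (ePoly ι d) := by
  induction d with
  | zero =>
    intro n hn
    refine ⟨0, ?_⟩
    by_contra h
    apply hn
    simp only [ePoly, polys, Finset.prod_singleton, map_zero, sub_zero]
    rw [coeff_X, if_neg]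
    simpa using fun h' => h h'.symm
  | succ d ih =>
    intro n hn
    obtain ⟨κ, w, h⟩ := ePoly_succ hX ih
    have h1 := congrArg (fun f => coeff f n) h
    simp only [comp_C_mul_X_coeff, coeff_C_mul, coeff_sub, coeff_pow_card F] at h1
    by_cases h2 : (ePoly ι d).coeff n = 0
    · rw [h2] at h1
      split_ifs at h1 with h3
      · have h4 : (ePoly ι d).coeff (n / Fintype.card F) ≠ 0 := by
          intro h4
          rw [h4, zero_pow Fintype.card_ne_zero] at h1
          have : (ePoly ι (d + 1)).coeff n * ι X ^ n = 0 := by rw [h1]; ring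
          exact mul_ne_zero hn (pow_ne_zero _ hX) this
        obtain ⟨i, hi⟩ := ih _ h4
        refine ⟨i + 1, ?_⟩
        rw [pow_succ, ← hi, Nat.div_mul_cancel h3]
      · have : (ePoly ι (d + 1)).coeff n * ι X ^ n = 0 := by rw [h1]; ring
        exact absurd this (mul_ne_zero hn (pow_ne_zero _ hX))
    · exact ih n h2

/-- Grouping the nonzero polynomials of degree `< d` into their orbits under `F^×`. -/
theorem ePoly_eq {ι : F[X] →ₐ[F] K} (hι : Function.Injective ι) (d : ℕ) :
    ∃ κ : K, κ ≠ 0 ∧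
      ePoly ι d = C κ * (X * expand K (Fintype.card F - 1) (fPoly ι d)) := by
  classical
  have hq : 1 < Fintype.card F := Fintype.one_lt_card
  have hm0 : ∀ m ∈ monics F d, ι m ≠ 0 := by
    intro m hm
    rw [Ne, map_eq_zero_iff ι hι]
    exact (mem_monics.1 hm).1.ne_zero
  have h0 : (0 : F[X]) ∈ polys F d := mem_polys.2 fun m _ => coeff_zero m
  have hmul : ∀ (c : F), c ≠ 0 → ∀ a : F[X], C c * a ∈ polys F d ↔ a ∈ polys F d := by
    intro c hc a
    simp only [mem_polys, coeff_C_mul, mul_eq_zero, hc, false_or]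
  have h1 : ∏ a ∈ (polys F d).erase 0, (X - C (ι a))
      = ∏ m ∈ monics F d, ∏ c ∈ Finset.univ.erase (0 : F), (X - C (ι (C c * m))) := by
    rw [← Finset.prod_product']
    symm
    refine Finset.prod_bij (fun x _ => C x.2 * x.1) ?_ ?_ ?_ ?_
    · rintro ⟨m, c⟩ h
      obtain ⟨hm, hc⟩ := Finset.mem_product.1 h
      have hc0 : c ≠ 0 := (Finset.mem_erase.1 hc).1
      refine Finset.mem_erase.2 ⟨mul_ne_zero (C_ne_zero.2 hc0) (mem_monics.1 hm).1.ne_zero, ?_⟩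
      exact (hmul c hc0 m).2 (Finset.mem_filter.1 hm).1
    · rintro ⟨m, c⟩ h ⟨m', c'⟩ h' heq
      have hm := (mem_monics.1 (Finset.mem_product.1 h).1).1
      have hm' := (mem_monics.1 (Finset.mem_product.1 h').1).1
      have hc0 : c ≠ 0 := (Finset.mem_erase.1 (Finset.mem_product.1 h).2).1
      have hcc := congrArg leadingCoeff heq
      simp only [leadingCoeff_mul, leadingCoeff_C, hm.leadingCoeff, hm'.leadingCoeff,
        mul_one] at hcc hm hm'
      subst hcc
      have := mul_left_cancel₀ (C_ne_zero.2 hc0) heq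
      exact Prod.ext this rfl
    · intro a ha
      obtain ⟨ha0, ha⟩ := Finset.mem_erase.1 ha
      have hl : a.leadingCoeff ≠ 0 := leadingCoeff_ne_zero.2 ha0
      refine ⟨(C a.leadingCoeff⁻¹ * a, a.leadingCoeff), Finset.mem_product.2 ⟨?_, ?_⟩, ?_⟩
      · rw [monics, Finset.mem_filter]
        refine ⟨(hmul _ (inv_ne_zero hl) a).2 ha, ?_⟩
        rw [Monic, leadingCoeff_mul, leadingCoeff_C, inv_mul_cancel₀ hl]
      · exact Finset.mem_erase.2 ⟨hl, Finset.mem_univ _⟩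
      · rw [← mul_assoc, ← C_mul, mul_inv_cancel₀ hl, C_1, one_mul]
    · intro a _
      rfl
  have h2 : ∀ m ∈ monics F d, ∏ c ∈ Finset.univ.erase (0 : F), (X - C (ι (C c * m)))
      = C (-(ι m) ^ (Fintype.card F - 1)) *
        expand K (Fintype.card F - 1) (1 - C ((ι m)⁻¹ ^ (Fintype.card F - 1)) * X) := by
    intro m hm
    have h3 := prod_sub_algebraMap_mul (F := F) (X : K[X]) (C (ι m))
    rw [← Finset.mul_prod_erase Finset.univ _ (Finset.mem_univ (0 : F))] at h3
    apply mul_left_cancel₀ (X_ne_zero : (X : K[X]) ≠ 0)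
    have h4 : ∏ c ∈ Finset.univ.erase (0 : F), (X - C (ι (C c * m)))
        = ∏ c ∈ Finset.univ.erase (0 : F), (X - algebraMap F K[X] c * C (ι m)) := by
      refine Finset.prod_congr rfl fun c _ => ?_
      have h5 : ι (C c) = algebraMap F K c := ι.commutes c
      rw [map_mul, h5, C_mul]; rfl
    rw [map_zero, zero_mul, sub_zero] at h3
    rw [h4, h3]
    have h6 : C (ι m) ^ (Fintype.card F - 1) * C (ι m)⁻¹ ^ (Fintype.card F - 1) = 1 := by
      rw [← mul_pow, ← C_mul, mul_inv_cancel₀ (hm0 m hm), C_1, one_pow]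
    obtain ⟨r, hr⟩ : ∃ r, Fintype.card F = r + 1 := ⟨Fintype.card F - 1, by omega⟩
    simp only [map_sub, map_one, map_mul, map_pow, expand_C, expand_X, C_neg]
    simp only [hr, Nat.add_sub_cancel] at h6 ⊢
    linear_combination (-X * X ^ r) * h6
  refine ⟨∏ m ∈ monics F d, (-(ι m) ^ (Fintype.card F - 1)), ?_, ?_⟩
  · exact Finset.prod_ne_zero_iff.2 fun m hm => neg_ne_zero.2 (pow_ne_zero _ (hm0 m hm))
  · rw [ePoly, ← Finset.mul_prod_erase _ _ h0, h1, Finset.prod_congr rfl h2,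
      Finset.prod_mul_distrib, fPoly, map_prod, map_prod]
    simp only [map_zero, sub_zero]
    ring

theorem fPoly_coeff_zero (ι : F[X] →ₐ[F] K) (d : ℕ) : (fPoly ι d).coeff 0 = 1 := by
  rw [coeff_zero_eq_eval_zero, fPoly, eval_prod]
  exact Finset.prod_eq_one fun m _ => by simp

/-- The coefficients of `fPoly` are those of `ePoly`, up to a common factor and reindexing. -/
theorem ePoly_coeff {ι : F[X] →ₐ[F] K} (hι : Function.Injective ι) (d : ℕ) :
    ∃ κ : K, κ ≠ 0 ∧ ∀ j, (ePoly ι d).coeff ((Fintype.card F - 1) * j + 1) =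
      κ * (fPoly ι d).coeff j := by
  obtain ⟨κ, hκ, h⟩ := ePoly_eq hι d
  have hq : 1 < Fintype.card F := Fintype.one_lt_card
  refine ⟨κ, hκ, fun j => ?_⟩
  rw [h, coeff_C_mul, coeff_X_mul, coeff_expand_mul' (by omega)]

/-- Up to degree `2 q`, only the monomials `1`, `Z` and `Z ^ (q + 1)` occur in `fPoly`, as
`1 + (q - 1) j` is a power of `q` for `j ≤ 2 q` only if `j = 0, 1, q + 1`. -/
theorem fPoly_coeff_eq_zero {ι : F[X] →ₐ[F] K} (hι : Function.Injective ι) (d : ℕ) {j : ℕ}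
    (h1 : 2 ≤ j) (h2 : j ≤ 2 * Fintype.card F) (h3 : j ≠ Fintype.card F + 1) :
    (fPoly ι d).coeff j = 0 := by
  have hX : ι X ≠ 0 := by rw [Ne, map_eq_zero_iff ι hι]; exact X_ne_zero
  obtain ⟨κ, hκ, h⟩ := ePoly_coeff hι d
  have hq : 1 < Fintype.card F := Fintype.one_lt_card
  by_contra hne
  obtain ⟨i, hi⟩ := ePoly_isLin hX d _ (by rw [h j]; exact mul_ne_zero hκ hne)
  obtain ⟨r, hr⟩ : ∃ r, Fintype.card F = r + 2 := ⟨Fintype.card F - 2, by omega⟩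
  rw [hr] at hi h2 h3
  simp only [show r + 2 - 1 = r + 1 by omega] at hi
  rcases Nat.lt_or_ge i 3 with h4 | h4
  · interval_cases i
    · simp at hi; omega
    · have : (r + 1) * j = (r + 1) * 1 := by rw [pow_one] at hi; omega
      have := Nat.eq_of_mul_eq_mul_left (by omega) this
      omega
    · have : (r + 1) * j = (r + 1) * (r + 3) := by nlinarith
      have := Nat.eq_of_mul_eq_mul_left (by omega) this
      omega
  · have h5 : (r + 2) ^ 3 ≤ (r + 2) ^ i := Nat.pow_le_pow_right (by omega) h4
    have h6 : (r + 1) * j ≤ (r + 1) * (2 * (r + 2)) := Nat.mul_le_mul_left _ h2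
    have h7 : (r + 2) ^ 3 = (r + 1) * (2 * (r + 2)) + 1 + (r ^ 3 + 4 * r ^ 2 + 6 * r + 3) := by
      ring
    omega

/-- The relation between the coefficients of `Z` and `Z ^ (q + 1)` of `fPoly` for consecutive
`d`, from the functional equation of `e_d`. -/
theorem fPoly_rec {ι : F[X] →ₐ[F] K} (hι : Function.Injective ι) (d : ℕ) :
    ι X ^ Fintype.card F ^ 2 * (fPoly ι (d + 1)).coeff (Fintype.card F + 1) =
      ι X * (fPoly ι d).coeff (Fintype.card F + 1) +
      (ι X ^ Fintype.card F * (fPoly ι (d + 1)).coeff 1 - ι X * (fPoly ι d).coeff 1) *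
        (fPoly ι d).coeff 1 ^ Fintype.card F := by
  have hX : ι X ≠ 0 := by rw [Ne, map_eq_zero_iff ι hι]; exact X_ne_zero
  obtain ⟨κ, w, h⟩ := ePoly_succ hX (ePoly_isLin hX d)
  obtain ⟨A, hA, hcA⟩ := ePoly_coeff hι d
  obtain ⟨A', hA', hcA'⟩ := ePoly_coeff hι (d + 1)
  have hq : 1 < Fintype.card F := Fintype.one_lt_card
  have hqpos : 0 < Fintype.card F := by omega
  have e1 : (Fintype.card F - 1) * 1 + 1 = Fintype.card F := by omega
  have e2 : (Fintype.card F - 1) * (Fintype.card F + 1) + 1 = Fintype.card F ^ 2 := by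
    obtain ⟨r, hr⟩ : ∃ r, Fintype.card F = r + 1 := ⟨Fintype.card F - 1, by omega⟩
    rw [hr, Nat.add_sub_cancel]; ring
  have a0 := hcA 0
  have a1 := hcA 1
  have a2 := hcA (Fintype.card F + 1)
  have b0 := hcA' 0
  have b1 := hcA' 1
  have b2 := hcA' (Fintype.card F + 1)
  rw [mul_zero, zero_add, fPoly_coeff_zero, mul_one] at a0 b0
  rw [e1] at a1 b1
  rw [e2] at a2 b2
  have hc : ∀ n, (ePoly ι (d + 1)).coeff n * ι X ^ n = κ * ((if Fintype.card F ∣ n then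
      (ePoly ι d).coeff (n / Fintype.card F) ^ Fintype.card F else 0) -
        w * (ePoly ι d).coeff n) := by
    intro n
    have h1 := congrArg (fun f => coeff f n) h
    simpa only [comp_C_mul_X_coeff, coeff_C_mul, coeff_sub, coeff_pow_card F] using h1
  have c0 := hc 1
  have c1 := hc (Fintype.card F)
  have c2 := hc (Fintype.card F ^ 2)
  rw [if_neg (by rw [Nat.dvd_one]; omega), a0, b0, pow_one] at c0
  rw [if_pos dvd_rfl, Nat.div_self hqpos, a0, a1, b1] at c1
  rw [if_pos (dvd_pow_self _ two_ne_zero), pow_two, Nat.mul_div_cancel _ hqpos, ← pow_two, a1, a2,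
    b2, mul_pow] at c2
  set q := Fintype.card F
  set D₁ := (fPoly ι d).coeff 1
  set D₂ := (fPoly ι d).coeff (q + 1)
  set D₁' := (fPoly ι (d + 1)).coeff 1
  set D₂' := (fPoly ι (d + 1)).coeff (q + 1)
  apply mul_left_cancel₀ hA'
  linear_combination c2 - D₁ ^ q * c1 + (D₁ * D₁ ^ q - D₂) * c0

end Linear

/-! ### Reciprocals of polynomials as power series in `T⁻¹` -/

section Recip

variable {F : Type} [Field F]

/-- The coercion of `F⟦X⟧` into the Laurent series, where `X` stands for `T⁻¹`. -/
noncomputable abbrev toK (F : Type) [Field F] : PowerSeries F →+* LaurentSeries F :=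
  HahnSeries.ofPowerSeries ℤ F

theorem toK_injective : Function.Injective (toK F) := HahnSeries.ofPowerSeries_injective

theorem toK_X_mul_TT : toK F PowerSeries.X * TT F = 1 := by
  rw [toK, HahnSeries.ofPowerSeries_X, TT, HahnSeries.single_mul_single]
  simp

theorem toK_X_pow_mul {m n : ℕ} (h : m ≤ n) :
    toK F PowerSeries.X ^ n * TT F ^ m = toK F PowerSeries.X ^ (n - m) := by
  obtain ⟨r, rfl⟩ := Nat.exists_eq_add_of_le h
  rw [Nat.add_sub_cancel_left, pow_add, mul_right_comm, ← mul_pow, toK_X_mul_TT, one_pow, one_mul]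

theorem TT_ne_zero : TT F ≠ 0 := right_ne_zero_of_mul_eq_one toK_X_mul_TT

/-- The map `a ↦ 1 / a` from `F[T]` to `F⟦T⁻¹⟧`, with `0 ↦ 0`. If `n` is the degree of `a`, then
`1 / a = T ^ (-n) / (T ^ (-n) a)`, and `T ^ (-n) a` is the reverse of `a` evaluated at `T⁻¹`. -/
noncomputable def recip (F : Type) [Field F] : F[X] →* PowerSeries F where
  toFun a := PowerSeries.X ^ a.natDegree * (a.reverse : PowerSeries F)⁻¹
  map_one' := by
    rw [show (1 : F[X]) = C 1 from C_1.symm, reverse_C]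
    simp
  map_mul' a b := by
    by_cases ha : a = 0
    · simp [ha]
    by_cases hb : b = 0
    · simp [hb]
    rw [reverse_mul_of_domain, natDegree_mul ha hb, Polynomial.coe_mul, PowerSeries.mul_inv_rev]
    ring

theorem recip_apply (a : F[X]) :
    recip F a = PowerSeries.X ^ a.natDegree * (a.reverse : PowerSeries F)⁻¹ := rfl

theorem toK_coe (r : F[X]) :
    toK F (r : PowerSeries F) = eval₂ HahnSeries.C (HahnSeries.single (1 : ℤ) (1 : F)) r := by
  have : (toK F).comp (Polynomial.coeToPowerSeries.ringHom) =
      eval₂RingHom HahnSeries.C (HahnSeries.single (1 : ℤ) (1 : F)) := by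
    refine Polynomial.ringHom_ext (fun c => ?_) ?_
    · simp [Polynomial.coeToPowerSeries.ringHom_apply, HahnSeries.ofPowerSeries_C]
    · simp [Polynomial.coeToPowerSeries.ringHom_apply]
  exact congrArg (fun g => g r) this

theorem toK_recip_mul {a : F[X]} (ha : a ≠ 0) : toK F (recip F a) * polyEmb F a = 1 := by
  let _ : Invertible (TT F) := ⟨toK F PowerSeries.X, toK_X_mul_TT, by
    rw [mul_comm]; exact toK_X_mul_TT⟩
  have h1 : polyEmb F a = toK F (a.reverse : PowerSeries F) * TT F ^ a.natDegree := by
    rw [toK_coe, ← HahnSeries.ofPowerSeries_X]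
    exact (eval₂_reverse_mul_pow HahnSeries.C (TT F) a).symm
  have h2 : (a.reverse : PowerSeries F) * (a.reverse : PowerSeries F)⁻¹ = 1 := by
    apply PowerSeries.mul_inv_cancel
    rw [Polynomial.constantCoeff_coe, coeff_zero_reverse]
    exact leadingCoeff_ne_zero.2 ha
  have h3 := congrArg (toK F) h2
  have h4 := toK_X_pow_mul (F := F) (le_refl a.natDegree)
  rw [map_mul, map_one] at h3
  rw [Nat.sub_self, pow_zero] at h4
  rw [h1, recip_apply, map_mul, map_pow]
  linear_combination h3 * toK F PowerSeries.X ^ a.natDegree * TT F ^ a.natDegree + h4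

theorem toK_recip (a : F[X]) : toK F (recip F a) = (polyEmb F a)⁻¹ := by
  by_cases ha : a = 0
  · simp [ha, recip_apply]
  · exact eq_inv_of_mul_eq_one_left (toK_recip_mul ha)

theorem X_pow_dvd_recip {a : F[X]} {n : ℕ} (h : n ≤ a.natDegree) :
    PowerSeries.X ^ n ∣ recip F a :=
  Dvd.dvd.mul_right (pow_dvd_pow _ h) _

theorem constantCoeff_recip {a : F[X]} (h : 1 ≤ a.natDegree) :
    PowerSeries.constantCoeff (recip F a) = 0 := by
  rw [← PowerSeries.X_dvd_iff, ← pow_one PowerSeries.X]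
  exact X_pow_dvd_recip h

/-- `polyEmb` as an `F`-algebra homomorphism. -/
noncomputable def polyEmbAlg (F : Type) [Field F] : F[X] →ₐ[F] LaurentSeries F :=
  { polyEmb F with
    commutes' := fun c => by
      simp [polyEmb, LaurentSeries.algebraMap_apply] }

theorem polyEmbAlg_apply (a : F[X]) : polyEmbAlg F a = polyEmb F a := rfl

theorem polyEmbAlg_X : polyEmbAlg F X = TT F := by simp [polyEmbAlg_apply, polyEmb]

theorem polyEmbAlg_injective : Function.Injective (polyEmbAlg F) := by
  rw [injective_iff_map_eq_zero]
  intro a h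
  by_contra ha
  have := toK_recip_mul ha
  rw [← polyEmbAlg_apply, h, mul_zero] at this
  exact zero_ne_one this

end Recip

/-! ### The coefficients `d₁` and `d₂` over `F⟦T⁻¹⟧` -/

section Integral

variable {F : Type} [Field F] [Fintype F]

variable (F) in
/-- The polynomial `fPoly`, with its coefficients taken in `F⟦T⁻¹⟧`. -/
noncomputable def fInt (d : ℕ) : (PowerSeries F)[X] :=
  ∏ m ∈ monics F d, (1 - C (recip F m ^ (Fintype.card F - 1)) * X)

theorem fInt_map (d : ℕ) : (fInt F d).map (toK F) = fPoly (polyEmbAlg F) d := by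
  rw [fInt, fPoly, Polynomial.map_prod]
  refine Finset.prod_congr rfl fun m _ => ?_
  simp only [Polynomial.map_sub, Polynomial.map_one, Polynomial.map_mul, map_C, map_X]
  rw [map_pow, toK_recip, polyEmbAlg_apply]

theorem fInt_coeff (d j : ℕ) :
    toK F ((fInt F d).coeff j) = (fPoly (polyEmbAlg F) d).coeff j := by
  rw [← fInt_map, coeff_map]

theorem fInt_coeff_eq_zero (d : ℕ) {j : ℕ} (h1 : 2 ≤ j) (h2 : j ≤ 2 * Fintype.card F)
    (h3 : j ≠ Fintype.card F + 1) : (fInt F d).coeff j = 0 := by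
  apply toK_injective
  rw [fInt_coeff, fPoly_coeff_eq_zero polyEmbAlg_injective d h1 h2 h3, map_zero]

/-- `fPoly_rec`, multiplied by `T ^ (-q ^ 2)`. -/
theorem fInt_rec (d : ℕ) :
    (fInt F (d + 1)).coeff (Fintype.card F + 1) =
      PowerSeries.X ^ (Fintype.card F ^ 2 - 1) * (fInt F d).coeff (Fintype.card F + 1) +
      (PowerSeries.X ^ (Fintype.card F ^ 2 - Fintype.card F) * (fInt F (d + 1)).coeff 1 -
        PowerSeries.X ^ (Fintype.card F ^ 2 - 1) * (fInt F d).coeff 1) *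
          (fInt F d).coeff 1 ^ Fintype.card F := by
  have hq : 1 ≤ Fintype.card F := Fintype.card_pos
  have h := fPoly_rec (polyEmbAlg_injective (F := F)) d
  rw [polyEmbAlg_X] at h
  simp only [← fInt_coeff] at h
  apply toK_injective
  have e0 := toK_X_pow_mul (F := F) (le_refl (Fintype.card F ^ 2))
  have e1 := toK_X_pow_mul (F := F) (m := 1) (n := Fintype.card F ^ 2) (Nat.one_le_pow _ _ hq)
  have e2 := toK_X_pow_mul (F := F) (m := Fintype.card F) (n := Fintype.card F ^ 2)
    (Nat.le_self_pow two_ne_zero _)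
  rw [Nat.sub_self, pow_zero] at e0
  rw [pow_one] at e1
  simp only [map_add, map_sub, map_mul, map_pow, ← e1, ← e2]
  linear_combination toK F PowerSeries.X ^ Fintype.card F ^ 2 * h
    - toK F ((fInt F (d + 1)).coeff (Fintype.card F + 1)) * e0

theorem fInt_succ_sub (d j : ℕ) :
    PowerSeries.X ^ d ∣ (fInt F (d + 1)).coeff j - (fInt F d).coeff j := by
  have hq : 1 < Fintype.card F := Fintype.one_lt_card
  rw [← Ideal.mem_span_singleton, ← Ideal.Quotient.eq]
  set π := Ideal.Quotient.mk (Ideal.span {(PowerSeries.X : PowerSeries F) ^ d})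
  have h : (fInt F (d + 1)).map π = (fInt F d).map π := by
    rw [fInt, fInt, Polynomial.map_prod, Polynomial.map_prod]
    refine (Finset.prod_subset (fun m hm => ?_) fun m hm hm' => ?_).symm
    · obtain ⟨h1, h2⟩ := mem_monics.1 hm
      exact mem_monics.2 ⟨h1, by omega⟩
    · have h1 : d ≤ m.natDegree := by
        by_contra h
        exact hm' (mem_monics.2 ⟨(mem_monics.1 hm).1, by omega⟩)
      have h2 : π (recip F m) = 0 :=
        Ideal.Quotient.eq_zero_iff_mem.2 (Ideal.mem_span_singleton.2 (X_pow_dvd_recip h1))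
      have h3 : Fintype.card F - 1 ≠ 0 := by omega
      simp [h2, h3]
  rw [← coeff_map, ← coeff_map, h]

theorem fInt_coeff_one_isUnit {d : ℕ} (hd : 1 ≤ d) : IsUnit ((fInt F d).coeff 1) := by
  have hq : 1 < Fintype.card F := Fintype.one_lt_card
  have h : (fInt F d).map PowerSeries.constantCoeff = 1 - X := by
    rw [fInt, Polynomial.map_prod, Finset.prod_eq_single 1]
    · simp
    · intro m hm h1
      have h2 : 1 ≤ m.natDegree := by
        by_contra h
        exact h1 ((mem_monics.1 hm).1.natDegree_eq_zero.1 (by omega))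
      have h3 : Fintype.card F - 1 ≠ 0 := by omega
      simp [constantCoeff_recip h2, h3]
    · intro h1
      exact absurd (mem_monics.2 ⟨monic_one, by rw [natDegree_one]; omega⟩) h1
  rw [PowerSeries.isUnit_iff_constantCoeff, ← coeff_map, h]
  simp [coeff_one]

/-- In the limit `d → ∞`, the relation `fInt_rec` determines `d₂ / d₁ ^ (q + 1)`. -/
theorem fInt_limit (d : ℕ) : PowerSeries.X ^ d ∣
    (1 - PowerSeries.X ^ (Fintype.card F ^ 2 - 1)) * (fInt F d).coeff (Fintype.card F + 1) -
      (PowerSeries.X ^ (Fintype.card F ^ 2 - Fintype.card F) -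
        PowerSeries.X ^ (Fintype.card F ^ 2 - 1)) * (fInt F d).coeff 1 ^ (Fintype.card F + 1) := by
  obtain ⟨a, ha⟩ := fInt_succ_sub (F := F) d 1
  obtain ⟨b, hb⟩ := fInt_succ_sub (F := F) d (Fintype.card F + 1)
  have h := fInt_rec (F := F) d
  generalize Fintype.card F ^ 2 - Fintype.card F = r at h ⊢
  generalize Fintype.card F ^ 2 - 1 = s at h ⊢
  refine ⟨PowerSeries.X ^ r * a * (fInt F d).coeff 1 ^ Fintype.card F - b, ?_⟩
  rw [pow_succ]
  linear_combination h + PowerSeries.X ^ r * (fInt F d).coeff 1 ^ Fintype.card F * ha - hb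

end Integral

/-! ### Convergence in the field of Laurent series -/

section Limit

variable {F : Type} [Field F]

/-- A sum of power series in `T⁻¹` whose partial sums are eventually `T⁻¹`-adically close to `L`
converges to `L` in the field of Laurent series. -/
theorem hasSum_toK {ι : Type*} (g : ι → PowerSeries F) (L : PowerSeries F)
    (h : ∀ M : ℕ, ∃ s₀ : Finset ι, ∀ s, s₀ ⊆ s → PowerSeries.X ^ M ∣ ∑ i ∈ s, g i - L) :
    HasSum (fun i => toK F (g i)) (toK F L) := by
  rw [HasSum, SummationFilter.unconditional_filter, Filter.tendsto_def]
  intro U hU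
  obtain ⟨γ, hγ⟩ := Valued.mem_nhds.1 hU
  obtain ⟨M, hM⟩ : ∃ M : ℕ, WithZero.exp (-(M : ℤ)) <
      MonoidWithZeroHom.ValueGroup₀.embedding γ.1 := by
    refine ⟨(-(WithZero.log (MonoidWithZeroHom.ValueGroup₀.embedding γ.1) - 1)).toNat, ?_⟩
    rw [← WithZero.lt_log_iff_exp_lt (by simp)]
    omega
  obtain ⟨s₀, hs₀⟩ := h M
  refine Filter.mem_atTop_sets.2 ⟨s₀, fun s hs => hγ ?_⟩
  change Valued.v.restrict (∑ i ∈ s, toK F (g i) - toK F L) < γ.1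
  rw [Valuation.restrict_lt_iff_lt_embedding, ← map_sum, ← map_sub]
  exact lt_of_le_of_lt ((LaurentSeries.intValuation_le_iff_coeff_lt_eq_zero F _).2
    (PowerSeries.X_pow_dvd_iff.1 (hs₀ s hs))) hM

theorem map_eval₂_int {A B : Type*} [CommRing A] [CommRing B] (φ : A →+* B) (u : A) (g : ℤ[X]) :
    φ (eval₂ (Int.castRingHom A) u g) = aeval (φ u) g := by
  rw [hom_eval₂, aeval_def, algebraMap_int_eq]
  congr 1
  exact RingHom.ext_int _ _

/-- The power series in `T⁻¹` representing `G_p(1 / a ^ k)`. -/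
noncomputable def gamma (p k : ℕ) (a : F[X]) : PowerSeries F :=
  eval₂ (Int.castRingHom (PowerSeries F)) (recip F a ^ k) (gpNum p) * ((1 - recip F a ^ k) ^ p)⁻¹

theorem gamma_mul {p k : ℕ} (hk : k ≠ 0) {a : F[X]} (ha : 1 ≤ a.natDegree) :
    gamma p k a * (1 - recip F a ^ k) ^ p =
      eval₂ (Int.castRingHom (PowerSeries F)) (recip F a ^ k) (gpNum p) := by
  rw [gamma, mul_assoc, PowerSeries.inv_mul_cancel, mul_one]
  simp [constantCoeff_recip ha, hk]

theorem toK_gamma {p k : ℕ} (hk : k ≠ 0) {a : F[X]} (ha : 1 ≤ a.natDegree) :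
    toK F (gamma p k a) = Gp p ((polyEmb F a ^ k)⁻¹) := by
  have h0 : (1 - recip F a ^ k) ^ p ≠ 0 := by
    intro h
    have := congrArg PowerSeries.constantCoeff h
    simp [constantCoeff_recip ha, hk] at this
  have h := congrArg (toK F) (gamma_mul (p := p) hk ha)
  rw [map_eval₂_int] at h
  rw [Gp, eq_div_iff, ← inv_pow, ← toK_recip, ← map_pow, ← h]
  · simp
  · rw [← inv_pow, ← toK_recip, ← map_pow, ← map_one (toK F), ← map_sub, ← map_pow]
    exact (map_ne_zero_iff _ toK_injective).2 h0

theorem X_pow_dvd_gamma {p k : ℕ} (hp : p.Prime) (hk : k ≠ 0) {a : F[X]} {n : ℕ}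
    (h : n ≤ a.natDegree) : PowerSeries.X ^ n ∣ gamma p k a := by
  obtain ⟨r, hr⟩ := X_dvd_gpNum p hp
  rw [gamma, hr, eval₂_mul, eval₂_X]
  exact (((X_pow_dvd_recip h).trans (dvd_pow_self _ hk)).mul_right _).mul_right _

end Limit

/-! ### The closed form -/

section Final

variable {F : Type} [Field F] [Fintype F]

/-- `core_identity` over `F⟦T⁻¹⟧ / (T ^ (-p M))`, after extracting `p`-th roots, together with
the value of `d₂ / d₁ ^ (q + 1)`. -/
theorem sum_gamma (p : ℕ) [hpf : Fact p.Prime] [CharP F p] {ℓ M : ℕ} (hM : 1 ≤ M)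
    (h1 : Fintype.card F + 1 ≤ p * ℓ) (h2 : p * ℓ ≤ 2 * Fintype.card F) :
    PowerSeries.X ^ M ∣
      (1 - PowerSeries.X ^ (Fintype.card F ^ 2 - 1)) *
        ∑ P ∈ primes F (p * M), gamma p ((Fintype.card F - 1) * ℓ) P -
      (ℓ : PowerSeries F) * (PowerSeries.X ^ (Fintype.card F ^ 2 - Fintype.card F) -
        PowerSeries.X ^ (Fintype.card F ^ 2 - 1)) := by
  have hp2 : 2 ≤ p := hpf.out.two_le
  have hq : 1 < Fintype.card F := Fintype.one_lt_card
  have hℓ : 1 ≤ ℓ := by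
    rcases Nat.eq_zero_or_pos ℓ with h | h
    · simp [h] at h1
    · exact h
  have hℓq : ℓ ≤ Fintype.card F := by nlinarith
  have hk : (Fintype.card F - 1) * ℓ ≠ 0 := Nat.mul_ne_zero (by omega) (by omega)
  set N := p * M with hN
  have hN1 : 1 ≤ N := Nat.mul_pos (by omega) (by omega)
  have hMN : M ≤ N := Nat.le_mul_of_pos_left M (by omega)
  set I : Ideal (PowerSeries F) := Ideal.span {PowerSeries.X ^ N} with hI
  have memI : ∀ x : PowerSeries F, Ideal.Quotient.mk I x = 0 ↔ PowerSeries.X ^ N ∣ x := fun x => by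
    rw [Ideal.Quotient.eq_zero_iff_mem, hI, Ideal.mem_span_singleton]
  have : Nontrivial (PowerSeries F ⧸ I) := by
    rw [Ideal.Quotient.nontrivial_iff, hI, Ne, Ideal.span_singleton_eq_top, isUnit_pow_iff (by omega)]
    exact PowerSeries.X_prime.not_isUnit
  have : CharP (PowerSeries F ⧸ I) p :=
    charP_of_injective_algebraMap (algebraMap F (PowerSeries F ⧸ I)).injective p
  set π := Ideal.Quotient.mk I with hπ
  have hcoef : ∀ j, PowerSeries.coeff j (((fInt F N).map π : (PowerSeries F ⧸ I)[X]) :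
      PowerSeries (PowerSeries F ⧸ I)) = π ((fInt F N).coeff j) := by
    intro j
    rw [Polynomial.coeff_coe, coeff_map]
  have key := core_identity p hN1 hq hℓ hℓq h1 h2
    ((π : PowerSeries F →* PowerSeries F ⧸ I).comp (recip F))
    (fun a _ hd => (memI _).2 (X_pow_dvd_recip hd))
    (((fInt F N).map π : (PowerSeries F ⧸ I)[X]) : PowerSeries (PowerSeries F ⧸ I))
    (by
      rw [fInt, Polynomial.map_prod, ← Polynomial.coeToPowerSeries.ringHom_apply, map_prod]
      refine Finset.prod_congr rfl fun m _ => ?_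
      simp [Polynomial.coeToPowerSeries.ringHom_apply])
    (fun j hj1 hj2 hj3 => by rw [hcoef, fInt_coeff_eq_zero N hj1 hj2 hj3, map_zero])
    (fun P => π (gamma p ((Fintype.card F - 1) * ℓ) P))
    (fun P hP => by
      have h := congrArg π (gamma_mul (p := p) hk (mem_primes.1 hP).2.2.natDegree_pos)
      rw [map_eval₂_int, map_mul, map_pow, map_sub, map_one, map_pow] at h
      exact h)
  rw [hcoef, hcoef, ← map_sum, ← map_neg, ← map_pow, ← map_pow, ← map_mul, ← map_natCast π ℓ,
    ← map_mul, ← map_mul, ← map_sub, ← map_pow, memI, hN, mul_comm p M, pow_mul,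
    IsIntegrallyClosed.pow_dvd_pow_iff (by omega : p ≠ 0)] at key
  rw [mul_comm M p, ← hN] at key
  have hlim := (pow_dvd_pow (PowerSeries.X : PowerSeries F) hMN).trans (fInt_limit (F := F) N)
  have hu : IsUnit ((fInt F N).coeff 1) := fInt_coeff_one_isUnit hN1
  have hneg : (-(fInt F N).coeff 1) ^ (Fintype.card F + 1)
      = (fInt F N).coeff 1 ^ (Fintype.card F + 1) := by
    have := sub_pow_card_pow F 0 ((fInt F N).coeff 1) 1
    rw [zero_sub, pow_one, zero_pow (by omega), zero_sub] at this
    rw [pow_succ, this, pow_succ]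
    ring
  set Sγ := ∑ P ∈ primes F N, gamma p ((Fintype.card F - 1) * ℓ) P
  set d₁ := (fInt F N).coeff 1
  set d₂ := (fInt F N).coeff (Fintype.card F + 1)
  obtain ⟨r, hr⟩ := Nat.exists_eq_add_of_le h1
  rw [show p * ℓ - Fintype.card F - 1 = r by omega, hr, pow_add, hneg,
    show d₁ ^ (Fintype.card F + 1) * (-d₁) ^ r * Sγ - ℓ * d₂ * (-d₁) ^ r
      = (-d₁) ^ r * (d₁ ^ (Fintype.card F + 1) * Sγ - ℓ * d₂) by ring,
    (hu.neg.pow r).dvd_mul_left] at key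
  rw [← (hu.pow (Fintype.card F + 1)).dvd_mul_left]
  convert dvd_add (key.mul_left (1 - PowerSeries.X ^ (Fintype.card F ^ 2 - 1)))
    (hlim.mul_left (ℓ : PowerSeries F)) using 1
  ring

theorem hasSum_Gp (p : ℕ) [hpf : Fact p.Prime] [CharP F p] {ℓ : ℕ}
    (h1 : Fintype.card F + 1 ≤ p * ℓ) (h2 : p * ℓ ≤ 2 * Fintype.card F) :
    HasSum (fun P : {P : F[X] // P.Monic ∧ Irreducible P} =>
      Gp p ((polyEmb F (P : F[X]) ^ ((Fintype.card F - 1) * ℓ))⁻¹))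
      ((ℓ : LaurentSeries F) * (TT F ^ Fintype.card F - TT F) ^ (Fintype.card F + 1) /
          ((TT F ^ Fintype.card F ^ 2 - TT F ^ Fintype.card F) *
            (TT F ^ Fintype.card F ^ 2 - TT F))) := by
  classical
  have hq : 1 < Fintype.card F := Fintype.one_lt_card
  have hk : (Fintype.card F - 1) * ℓ ≠ 0 := by
    refine Nat.mul_ne_zero (by omega) ?_
    rintro rfl
    simp at h1
  have hq2 : Fintype.card F < Fintype.card F ^ 2 := by nlinarith
  set b : PowerSeries F := 1 - PowerSeries.X ^ (Fintype.card F ^ 2 - 1) with hb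
  set c : PowerSeries F := PowerSeries.X ^ (Fintype.card F ^ 2 - Fintype.card F) -
        PowerSeries.X ^ (Fintype.card F ^ 2 - 1) with hc
  have hbu : PowerSeries.constantCoeff b ≠ 0 := by
    have : Fintype.card F ^ 2 - 1 ≠ 0 := by omega
    simp [hb, this]
  have hbb : b * b⁻¹ = 1 := PowerSeries.mul_inv_cancel b hbu
  have hsum : HasSum (fun P : {P : F[X] // P.Monic ∧ Irreducible P} =>
      toK F (gamma p ((Fintype.card F - 1) * ℓ) (P : F[X]))) (toK F (ℓ * c * b⁻¹)) := by
    refine hasSum_toK (fun P : {P : F[X] // P.Monic ∧ Irreducible P} =>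
      gamma p ((Fintype.card F - 1) * ℓ) (P : F[X])) _ fun M => ?_
    -- enlarging `M` to `M + 1` avoids the empty modulus
    refine ⟨(primes F (p * (M + 1))).subtype _, fun s hs => ?_⟩
    have hmain := sum_gamma (F := F) p (M := M + 1) (by omega) h1 h2
    rw [← Finset.sum_sdiff hs, Finset.sum_subtype_of_mem _ fun P hP =>
      ⟨(mem_primes.1 hP).1, (mem_primes.1 hP).2.2⟩, add_sub_assoc]
    refine dvd_add (Finset.dvd_sum fun P hP => X_pow_dvd_gamma hpf.out hk ?_) ?_
    · have hP := (Finset.mem_sdiff.1 hP).2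
      by_contra hlt
      refine hP (Finset.mem_subtype.2 (mem_primes.2 ⟨P.2.1, ?_, P.2.2⟩))
      have := Nat.le_mul_of_pos_left (M + 1) hpf.out.pos
      omega
    · refine (pow_dvd_pow _ (Nat.le_succ M)).trans ?_
      convert hmain.mul_left b⁻¹ using 1
      linear_combination (-∑ P ∈ primes F (p * (M + 1)),
        gamma p ((Fintype.card F - 1) * ℓ) P) * hbb
  convert hsum using 1
  · funext P
    exact (toK_gamma hk P.2.2.natDegree_pos).symm
  -- the closed form, after clearing denominators
  have hT : TT F ^ Fintype.card F ^ 2 - TT F ^ Fintype.card F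
      = (TT F ^ Fintype.card F - TT F) ^ Fintype.card F := by
    have := sub_pow_card_pow F (TT F ^ Fintype.card F) (TT F) 1
    rw [pow_one, ← pow_mul, ← pow_two] at this
    exact this.symm
  have e0 := toK_X_pow_mul (F := F) (le_refl (Fintype.card F ^ 2))
  have e1 := toK_X_pow_mul (F := F) (m := 1) (n := Fintype.card F ^ 2)
    (Nat.one_le_pow _ _ (by omega))
  have e2 := toK_X_pow_mul (F := F) hq2.le
  rw [Nat.sub_self, pow_zero] at e0
  rw [pow_one] at e1
  have eb : toK F b = toK F PowerSeries.X ^ Fintype.card F ^ 2 *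
      (TT F ^ Fintype.card F ^ 2 - TT F) := by
    rw [hb, map_sub, map_one, map_pow, ← e0, ← e1]; ring
  have ec : toK F c = toK F PowerSeries.X ^ Fintype.card F ^ 2 *
      (TT F ^ Fintype.card F - TT F) := by
    rw [hc, map_sub, map_pow, map_pow, ← e1, ← e2]; ring
  have hb0 : toK F b ≠ 0 := by
    rw [Ne, map_eq_zero_iff _ toK_injective]
    intro h
    exact hbu (by rw [h, map_zero])
  have hc0 : toK F c ≠ 0 := by
    rw [Ne, map_eq_zero_iff _ toK_injective, hc, sub_eq_zero]
    intro h
    have := congrArg (PowerSeries.coeff (Fintype.card F ^ 2 - 1)) h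
    rw [PowerSeries.coeff_X_pow, PowerSeries.coeff_X_pow, if_pos rfl, if_neg (by omega)] at this
    exact zero_ne_one this
  have hbinv := congrArg (toK F) hbb
  rw [map_mul, map_one] at hbinv
  rw [hT, map_mul, map_mul, map_natCast, eq_inv_of_mul_eq_one_right hbinv, eb, ec]
  rw [eb] at hb0
  rw [ec] at hc0
  have hx := left_ne_zero_of_mul hb0
  have hy := right_ne_zero_of_mul hb0
  have hz := right_ne_zero_of_mul hc0
  rw [pow_succ]
  field_simp

end Final

/-- Let `q` be a power of a prime `p` (a finite field `F` with `q = |F|`, `p = char F`)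
and let `k = (q-1)ℓ` with `q/p < ℓ ≤ 2q/p`.  Then in `K̂ = F_q((T⁻¹))`,
`∑_{P ∈ 𝒫₁} G_p(1/Pᵏ) = ℓ (Tᑫ - T)^{q+1} / ((T^{q²} - Tᑫ)(T^{q²} - T))`,
where `ℓ` is reduced modulo `p` (via the natural number cast). -/
theorem thakur_sum_Gp_explicit (F : Type) [Field F] [Fintype F]
    (ℓ : ℕ) (h1 : Fintype.card F < ℓ * ringChar F)
    (h2 : ℓ * ringChar F ≤ 2 * Fintype.card F) :
    ∑' P : {P : Polynomial F // P.Monic ∧ Irreducible P},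
      Gp (ringChar F) (((polyEmb F (P : Polynomial F)) ^ ((Fintype.card F - 1) * ℓ))⁻¹)
      = (ℓ : LaurentSeries F) *
          (TT F ^ Fintype.card F - TT F) ^ (Fintype.card F + 1) /
          ((TT F ^ Fintype.card F ^ 2 - TT F ^ Fintype.card F) *
            (TT F ^ Fintype.card F ^ 2 - TT F)) := by
  have hchar : CharP F (ringChar F) := ringChar.charP F
  have hprime : Fact (ringChar F).Prime := ⟨CharP.char_is_prime F (ringChar F)⟩
  rw [mul_comm] at h1 h2
  exact (hasSum_Gp (ringChar F) h1 h2).tsum_eq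
end

section
/- Let q be a power of an odd prime p and k a positive integer. Then in the rational function field F_q(U), ∑_{a ∈ F_q^×} G_p(1/(aU)^k) = gcd(q−1, k) · G_p(1/U^{lcm(q−1,k)}), where gcd(q−1,k) is reduced modulo p. -/
/-!
In characteristic `p` the numerator of `G_p` is the truncated logarithm `∑_{0 < j < p} uʲ / j`
(`aeval_gpNum`), and `(1 - u)ᵖ = 1 - uᵖ`, so as a power series `G_p(u) = ∑_{p ∤ n} uⁿ / n`.
Put `V = 1 / U`, `g = gcd (q - 1) k` and `r = (q - 1) / g`, so that `lcm (q - 1) k = k r`. Summing over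
`a ∈ F_q^×`, the coefficient of `V^(kn) / n` becomes a power sum over `F_q^×`, which is `-1` if
`q - 1 ∣ k n`, that is if `r ∣ n`, and `0` otherwise. For `n = r m` the resulting coefficient
`-1 / (r m)` equals `g / m`, because `g r = q - 1 = -1` in `F_q`; this is `g` times `G_p(V^(kr))`.

Power series are avoided by truncation (`Gp_eq_sum_div`): `G_p(u)` is the partial sum over `n < p r`
divided by `(1 - uʳ)ᵖ`, and for `u = (bV)ᵏ` with `b ∈ F_q^×` this denominator is independent of `b`.
-/


open Polynomial

/-- Oddness of `p` makes the coefficients in degree `p` cancel, so only the degrees `0 < j < p` survive. -/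
theorem gpNum_coeff_int {p : ℕ} (hp : p.Prime) (hodd : Odd p) (j : ℕ) :
    ((1 - X ^ p) - (1 - X) ^ p : ℤ[X]).coeff j
      = if j = 0 ∨ p ≤ j then 0 else -((-1) ^ j * (p.choose j : ℤ)) := by
  have h1 : (1 - X : ℤ[X]) ^ p = ∑ m ∈ Finset.range (p + 1), C ((-1) ^ m * (p.choose m : ℤ)) * X ^ m := by
    rw [sub_eq_neg_add, add_pow]
    refine Finset.sum_congr rfl fun m _ => ?_
    rw [neg_pow]
    simp
    ring
  have h2 : ((1 - X : ℤ[X]) ^ p).coeff j = if j ≤ p then (-1) ^ j * (p.choose j : ℤ) else 0 := by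
    rw [h1, finsetSum_coeff]
    simp only [coeff_C_mul_X_pow]
    simp
  rw [coeff_sub, h2, coeff_sub, coeff_one, coeff_X_pow]
  have := hp.pos
  rcases Nat.eq_zero_or_pos j with rfl | hj
  · simp [hp.ne_zero, hp.ne_zero.symm]
  · rcases lt_trichotomy j p with h | rfl | h
    · simp [hj.ne', h.ne, h.le, not_le.2 h]
    · simp [hj.ne', hodd.neg_one_pow]
    · simp [hj.ne', h.ne', h.le, not_le.2 h]

theorem cast_choose_pred {K : Type*} [Field K] {p : ℕ} [CharP K p] (hp : p.Prime) (j : ℕ)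
    (hj : j < p) : ((p - 1).choose j : K) = (-1) ^ j := by
  induction j with
  | zero => simp
  | succ j ih =>
    have h : p.choose (j + 1) = (p - 1).choose j + (p - 1).choose (j + 1) := by
      obtain ⟨n, rfl⟩ := Nat.exists_eq_succ_of_ne_zero hp.ne_zero
      simp [Nat.choose_succ_succ]
    have h0 : (p.choose (j + 1) : K) = 0 :=
      (CharP.cast_eq_zero_iff K p _).2 (hp.dvd_choose_self (Nat.succ_ne_zero j) hj)
    rw [h, Nat.cast_add, ih (by omega)] at h0
    rw [pow_succ]
    linear_combination h0

/-- In characteristic `p`, the numerator of `G_p` is the truncated logarithm `∑_{0 < j < p} uʲ / j`.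
The term `j = 0` on the right vanishes because `1 / 0 = 0`. -/
theorem aeval_gpNum {K : Type*} [Field K] {p : ℕ} [CharP K p] (hp : p.Prime) (hodd : Odd p)
    (u : K) : aeval u (gpNum p) = ∑ j ∈ Finset.range p, u ^ j / (j : K) := by
  have hdeg : ((1 - X ^ p) - (1 - X) ^ p : ℤ[X]).natDegree < p := by
    by_contra! h
    have h0 := gpNum_coeff_int hp hodd ((1 - X ^ p) - (1 - X) ^ p : ℤ[X]).natDegree
    rw [if_pos (Or.inr h), coeff_natDegree, leadingCoeff_eq_zero] at h0
    rw [h0, natDegree_zero] at h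
    exact hp.ne_zero (Nat.le_zero.1 h)
  rw [gpNum, sum_over_range' _ (by simp) p hdeg, map_sum]
  refine Finset.sum_congr rfl fun j hj => ?_
  rw [Finset.mem_range] at hj
  rw [gpNum_coeff_int hp hodd]
  rcases Nat.eq_zero_or_pos j with rfl | hj0
  · simp
  rw [if_neg (by omega)]
  obtain ⟨i, rfl⟩ := Nat.exists_eq_succ_of_ne_zero hj0.ne'
  obtain ⟨d, hd⟩ := hp.dvd_choose_self (Nat.succ_ne_zero i) hj
  have hpz : (p : ℤ) ≠ 0 := by exact_mod_cast hp.ne_zero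
  have hq : -((-1) ^ (i + 1) * (p.choose (i + 1) : ℤ)) / (p : ℤ) = (-1) ^ i * d := by
    apply Int.ediv_eq_of_eq_mul_right hpz
    rw [hd]; push_cast; ring
  -- The identity `(i + 1) * choose p (i + 1) = p * choose (p - 1) i`, divided by `p`.
  have hmul : d * (i + 1) = (p - 1).choose i := by
    apply Nat.eq_of_mul_eq_mul_left hp.pos
    rw [← mul_assoc, ← hd]
    have := Nat.add_one_mul_choose_eq (p - 1) i
    rw [Nat.sub_add_cancel hp.one_le] at this
    rw [this]
  have hne : ((i + 1 : ℕ) : K) ≠ 0 := fun h =>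
    absurd (Nat.le_of_dvd (Nat.succ_pos i) ((CharP.cast_eq_zero_iff K p _).1 h)) (by omega)
  have hmulK : (d : K) * ((i + 1 : ℕ) : K) = (-1) ^ i := by
    rw [← cast_choose_pred hp i (by omega), ← hmul, Nat.cast_mul]
  rw [Nat.succ_eq_add_one, hq, eq_div_iff hne]
  have h1 : ((-1 : K) ^ i) * (-1) ^ i = 1 := by rw [← mul_pow]; simp
  rw [map_mul, aeval_C, map_pow, aeval_X, algebraMap_int_eq, eq_intCast]
  push_cast
  push_cast at hmulK
  linear_combination (-1) ^ i * u ^ (i + 1) * hmulK + u ^ (i + 1) * h1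

/-- A finite form of `G_p(u) = ∑_{p ∤ n} uⁿ / n`: in characteristic `p` the terms with `p ∣ n` vanish
because `1 / 0 = 0`, the remaining coefficients are `p`-periodic, and `(1 - uʳ)ᵖ = 1 - u^(pr)` is a
common denominator for all `u` with the same `uʳ`. -/
theorem Gp_eq_sum_div {K : Type*} [Field K] {p : ℕ} [CharP K p] (hp : p.Prime) (hodd : Odd p)
    (r : ℕ) (u : K) (hu : u ^ r ≠ 1) :
    Gp p u = (∑ n ∈ Finset.range (p * r), u ^ n / (n : K)) / (1 - u ^ r) ^ p := by
  have : Fact p.Prime := ⟨hp⟩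
  have hu1 : u ≠ 1 := by rintro rfl; simp at hu
  rw [Gp, aeval_gpNum hp hodd, div_eq_div_iff (pow_ne_zero _ (sub_ne_zero.2 hu1.symm))
    (pow_ne_zero _ (sub_ne_zero.2 hu.symm))]
  clear hu
  induction r with
  | zero => simp [hp.ne_zero]
  | succ r ih =>
    rw [mul_add_one, Finset.sum_range_add]
    have : ∀ j : ℕ, u ^ (p * r + j) / ((p * r + j : ℕ) : K) = u ^ (p * r) * (u ^ j / (j : K)) := by
      intro j
      simp [pow_add, mul_div_assoc]
    simp only [this]
    rw [← Finset.mul_sum, add_mul, ← ih]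
    simp only [sub_pow_char]
    ring

theorem sum_range_mul_dvd {M : Type*} [AddCommMonoid M] (p r : ℕ) (hr : 0 < r) (f : ℕ → M) :
    ∑ n ∈ Finset.range (p * r), (if r ∣ n then f n else 0) = ∑ m ∈ Finset.range p, f (r * m) := by
  rw [← Finset.sum_filter]
  symm
  refine Finset.sum_bij (fun m _ => r * m) ?_ ?_ ?_ ?_
  · intro m hm
    simp only [Finset.mem_filter, Finset.mem_range] at hm ⊢
    exact ⟨by rw [mul_comm]; gcongr, dvd_mul_right _ _⟩
  · intro a _ b _ h
    exact Nat.eq_of_mul_eq_mul_left hr h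
  · intro n hn
    simp only [Finset.mem_filter, Finset.mem_range] at hn
    obtain ⟨hn, m, rfl⟩ := hn
    rw [mul_comm] at hn
    exact ⟨m, Finset.mem_range.2 (Nat.lt_of_mul_lt_mul_right hn), rfl⟩
  · intros; rfl

/-- Let `q` be a power of an odd prime `p` (a finite field `F` with `q = |F|`,
`p = char F` odd) and `k` a positive integer.  Then in `F_q(U)`,
`∑_{a ∈ F_q^×} G_p(1/(aU)ᵏ) = gcd(q-1, k) ⬝ G_p(1/U^{lcm(q-1,k)})`, where
`gcd(q-1,k)` is reduced modulo `p` (via the natural number cast). -/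
theorem sum_over_units_Gp (F : Type) [Field F] [Fintype F] [DecidableEq F]
    (hodd : Odd (ringChar F)) (k : ℕ) (hk : 0 < k) :
    ∑ a : Fˣ, Gp (ringChar F) (((RatFunc.C (a : F) * RatFunc.X) ^ k)⁻¹)
      = (Nat.gcd (Fintype.card F - 1) k : RatFunc F) *
          Gp (ringChar F) (((RatFunc.X : RatFunc F) ^ Nat.lcm (Fintype.card F - 1) k)⁻¹) := by
  have hp : (ringChar F).Prime := CharP.char_is_prime F (ringChar F)
  have : CharP (RatFunc F) (ringChar F) :=
    charP_of_injective_algebraMap (algebraMap F (RatFunc F)).injective _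
  generalize ringChar F = p at *
  have : Fact p.Prime := ⟨hp⟩
  have hq : 0 < Fintype.card F - 1 := Nat.sub_pos_of_lt Fintype.one_lt_card
  have hcast : ((Fintype.card F - 1 : ℕ) : RatFunc F) = -1 := by
    have h : ((Fintype.card F : ℕ) : RatFunc F) = 0 := by
      rw [← map_natCast (algebraMap F (RatFunc F)), FiniteField.cast_card_eq_zero, map_zero]
    rw [Nat.cast_sub Fintype.card_pos, h]; simp
  have hord : ∀ a : Fˣ, (a : F) ^ (Fintype.card F - 1) = 1 := fun a =>
    FiniteField.pow_card_sub_one_eq_one _ a.ne_zero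
  have hsum := FiniteField.sum_pow_units F
  generalize Fintype.card F - 1 = Q at *
  obtain ⟨r, hr⟩ := Nat.gcd_dvd_left Q k
  set g := Nat.gcd Q k with hg
  have hg0 : 0 < g := Nat.gcd_pos_of_pos_left _ hq
  have hr0 : 0 < r := Nat.pos_of_ne_zero (by rintro rfl; simp at hr; omega)
  -- With `Q = q - 1 = g * r`, the exponent `lcm (q - 1) k` is `k * r`.
  have hL : Nat.lcm Q k = k * r := by
    apply Nat.eq_of_mul_eq_mul_left hg0
    rw [hg, Nat.gcd_mul_lcm, ← hg]
    conv_lhs => rw [hr]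
    ring
  have hdvd : ∀ n, Q ∣ k * n ↔ r ∣ n := by
    intro n
    constructor
    · intro h
      have h' : k * r ∣ k * n := hL ▸ Nat.lcm_dvd h (dvd_mul_right _ _)
      exact Nat.dvd_of_mul_dvd_mul_left hk h'
    · intro h
      exact (hL ▸ Nat.dvd_lcm_left Q k : Q ∣ k * r).trans (mul_dvd_mul_left k h)
  rw [hL]
  set V : RatFunc F := RatFunc.X⁻¹ with hV
  have hVL : V ^ (k * r) ≠ 1 := by
    rw [hV, inv_pow, ne_eq, inv_eq_one, ← RatFunc.algebraMap_X, ← map_pow,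
      ← map_one (algebraMap F[X] (RatFunc F)), (RatFunc.algebraMap_injective F).eq_iff]
    intro h
    have := congrArg natDegree h
    simp [hk.ne', hr0.ne'] at this
  have hgr : (g : RatFunc F) * r = -1 := by rw [← hcast, hr, Nat.cast_mul]
  have hrK : (r : RatFunc F) ≠ 0 := by rintro h; simp [h] at hgr
  have hu : ∀ a : Fˣ, ((RatFunc.C (a : F) * RatFunc.X) ^ k)⁻¹
      = RatFunc.C ((a⁻¹ : Fˣ) : F) ^ k * V ^ k := by
    intro a
    simp [hV, mul_pow, mul_comm]
  -- All the summands share the denominator `1 - V ^ (k * r * p)`, since `b ^ (k * r) = 1`.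
  have hur : ∀ b : Fˣ, (RatFunc.C (b : F) ^ k * V ^ k) ^ r = V ^ (k * r) := by
    intro b
    obtain ⟨s, hs⟩ : Q ∣ k * r := (hdvd r).2 dvd_rfl
    have : (b : F) ^ (k * r) = 1 := by rw [hs, pow_mul, hord, one_pow]
    rw [mul_pow, ← pow_mul, ← pow_mul, ← map_pow, this, map_one, one_mul]
  -- Replacing `a` by its inverse turns the sum into one over positive powers.
  simp only [hu]
  refine (Equiv.sum_comp (Equiv.inv Fˣ) fun b : Fˣ => Gp p (RatFunc.C (b : F) ^ k * V ^ k)).trans ?_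
  have hGp : ∀ b : Fˣ, Gp p (RatFunc.C (b : F) ^ k * V ^ k)
      = (∑ n ∈ Finset.range (p * r), RatFunc.C ((b : F) ^ (k * n)) * (V ^ (k * n) / (n : RatFunc F)))
          / (1 - V ^ (k * r)) ^ p := by
    intro b
    rw [Gp_eq_sum_div hp hodd r _ (by rw [hur]; exact hVL), hur]
    congr 1
    refine Finset.sum_congr rfl fun n _ => ?_
    rw [mul_pow, ← pow_mul, ← pow_mul, map_pow, mul_div_assoc]
  rw [Finset.sum_congr rfl fun b _ => hGp b, ← Finset.sum_div, Finset.sum_comm]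
  -- The power sum over `Fˣ` is `-1` or `0`, so only the multiples `n = r * m` contribute.
  have hinner : ∀ n : ℕ, ∑ b : Fˣ, RatFunc.C ((b : F) ^ (k * n)) * (V ^ (k * n) / (n : RatFunc F))
      = if r ∣ n then -(V ^ (k * n) / (n : RatFunc F)) else 0 := by
    intro n
    rw [← Finset.sum_mul, ← map_sum]
    have := hsum (k * n)
    rw [this]
    by_cases h : r ∣ n
    · rw [if_pos h, if_pos ((hdvd n).2 h)]; simp
    · rw [if_neg h, if_neg (mt (hdvd n).1 h)]; simp
  simp only [hinner]
  rw [sum_range_mul_dvd p r hr0 fun n => -(V ^ (k * n) / (n : RatFunc F)), ← inv_pow, ← hV, Gp,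
    aeval_gpNum hp hodd, sub_pow_char, ← mul_div_assoc, Finset.mul_sum]
  congr 1
  refine Finset.sum_congr rfl fun m _ => ?_
  rw [← mul_assoc, pow_mul V (k * r), Nat.cast_mul, ← mul_div_assoc, ← neg_div]
  rcases eq_or_ne (m : RatFunc F) 0 with h | h
  · simp [h]
  · rw [div_eq_div_iff (mul_ne_zero hrK h) h]
    -- Here `-1 / r = g`, because `g * r = q - 1 = -1` in characteristic `p`.
    linear_combination (-(V ^ (k * r)) ^ m * m) * hgr
end

section
/- Let q be a power of a prime p and let ℓ be a positive integer that is not of the form (q^j − 1)/(q − 1) for any integer j ≥ 0. Then e_ℓ(1/A^{q−1})_{A ∈ A_1} = 0 in K̂ = F_q((T^{-1})); that is, the sum over all ℓ-element sets {A_1, …, A_ℓ} of distinct monic polynomials in F_q[T] of ∏_{i=1}^{ℓ} A_i^{-(q−1)} vanishes. -/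
/-!
For each `d`, the partial sum over `ℓ`-element sets of monic polynomials of degree `< d` already
vanishes exactly; these finite families exhaust the index set, so the full sum is `0`.

The finite identity comes from the Carlitz polynomial `E_d(X) = ∏_{deg A < d} (X - A)`. The
polynomials of degree `< d` form an `F_q`-vector space, which makes `E_d` a `q`-linearized polynomial:
the recursion `E_{d+1} = E_d ^ q - E_d(T^d) ^ (q-1) * E_d` shows by induction that only the monomials
`X ^ (q ^ j)` occur in it (`carlitz_mem_linearized`). Grouping the nonzero `A` by their monic
associates gives `E_d(X) = X * ∏_{A monic} (X ^ (q-1) - A ^ (q-1))` (`carlitz_eq_expand`), so up to a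
nonzero factor the elementary symmetric sum in the `A ^ (-(q-1))` is the coefficient of
`X ^ (ℓ(q-1)+1)` in `E_d`, and this is zero unless `ℓ(q-1)+1` is a power of `q`.
-/


open Polynomial

/-! ### Definitions and the product over `F` -/

/-- The finite set of polynomials over `F` of degree `< d`. -/
noncomputable def polysLT (F : Type) [Field F] [Fintype F] (d : ℕ) : Finset F[X] :=
  have : Finite (degreeLT F d) := Finite.of_equiv _ (degreeLTEquiv F d).toEquiv.symm
  (Set.toFinite ((degreeLT F d : Submodule F F[X]) : Set F[X])).toFinset

open Classical in
/-- The finite set of monic polynomials over `F` of degree `< d`. -/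
noncomputable def monicsLT (F : Type) [Field F] [Fintype F] (d : ℕ) : Finset F[X] :=
  {A ∈ polysLT F d | A.Monic}

/-- The `q`-linearized polynomials over `K`: linear combinations of the monomials `X ^ (q ^ i)`. -/
noncomputable def linearized (K : Type) [Field K] (q : ℕ) : Submodule K K[X] :=
  Submodule.span K (Set.range fun i : ℕ => (X : K[X]) ^ q ^ i)

/-- The Carlitz polynomial `∏_{deg A < d} (X - A)`, with `F[X]` mapped into `K` by `φ`. -/
noncomputable def carlitz {F K : Type} [Field F] [Fintype F] [Field K] (φ : F[X] →+* K) (d : ℕ) :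
    K[X] :=
  ∏ A ∈ polysLT F d, (X - C (φ A))

section

variable {F K : Type} [Field F] [Fintype F] [Field K]

lemma mem_polysLT {d : ℕ} {A : F[X]} : A ∈ polysLT F d ↔ A.degree < d := by
  simp [polysLT, mem_degreeLT]

lemma mem_monicsLT {d : ℕ} {A : F[X]} : A ∈ monicsLT F d ↔ A.degree < d ∧ A.Monic := by
  simp [monicsLT, mem_polysLT]

lemma prod_X_sub_C_univ : ∏ c : F, (X - C c) = X ^ Fintype.card F - X := by
  have h1 : 1 < Fintype.card F := Fintype.one_lt_card
  have hm : (X ^ Fintype.card F - X : F[X]).Monic := monic_X_pow_sub (by simpa using h1)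
  have := prod_multiset_X_sub_C_of_monic_of_roots_card_eq hm (by
    rw [FiniteField.roots_X_pow_card_sub_X, FiniteField.X_pow_card_sub_X_natDegree_eq F h1]
    simp)
  rw [FiniteField.roots_X_pow_card_sub_X] at this
  exact this

/-- The homogenization of `∏_c (X - c) = X ^ q - X`. -/
lemma prod_sub_mul_C (ι : F →+* K) (y : K[X]) (b : K) :
    ∏ c : F, (y - C (ι c * b)) =
      y ^ Fintype.card F - C b ^ (Fintype.card F - 1) * y := by
  have h1 : 1 < Fintype.card F := Fintype.one_lt_card
  obtain ⟨n, hn⟩ : ∃ n, Fintype.card F = n + 1 := ⟨_, (Nat.sub_add_cancel h1.le).symm⟩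
  have hn0 : n ≠ 0 := by omega
  rcases eq_or_ne b 0 with rfl | hb
  · simp [hn, hn0]
  have hC : (C b : K[X]) * C b⁻¹ = 1 := by rw [← C_mul, mul_inv_cancel₀ hb, C_1]
  have key := congrArg (eval₂ ((C : K →+* K[X]).comp ι) (C b⁻¹ * y)) (prod_X_sub_C_univ (F := F))
  simp only [eval₂_finsetProd, eval₂_sub, eval₂_X, eval₂_C, eval₂_pow, RingHom.comp_apply] at key
  calc ∏ c : F, (y - C (ι c * b)) = ∏ c : F, (C b * (C b⁻¹ * y - C (ι c))) := by
        refine Finset.prod_congr rfl fun c _ => ?_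
        rw [C_mul]
        linear_combination (-y) * hC
    _ = C b ^ Fintype.card F * ((C b⁻¹ * y) ^ Fintype.card F - C b⁻¹ * y) := by
        rw [Finset.prod_mul_distrib, key]; simp
    _ = _ := by
        rw [mul_sub, ← mul_pow, ← mul_assoc, hC, one_mul, ← mul_assoc, hn, pow_succ (C b) n,
          mul_assoc (C b ^ n), hC]
        simp

/-! ### Linearized polynomials -/

/-- Additivity of the iterated `q`-Frobenius, since `K` has the same characteristic as `F`. -/
lemma sub_pow_card (ι : F →+* K) (x y : K[X]) (i : ℕ) :
    (x - y) ^ Fintype.card F ^ i = x ^ Fintype.card F ^ i - y ^ Fintype.card F ^ i := by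
  obtain ⟨p, hp⟩ := CharP.exists F
  obtain ⟨n, hpp, hn⟩ := FiniteField.card F p
  have := Fact.mk hpp
  have : CharP K p := charP_of_injective_ringHom ι.injective p
  rw [hn, ← pow_mul]
  exact sub_pow_char_pow ..

lemma linearized_pow (ι : F →+* K) {P : K[X]} (hP : P ∈ linearized K (Fintype.card F)) :
    P ^ Fintype.card F ∈ linearized K (Fintype.card F) := by
  have hq : Fintype.card F ≠ 0 := Fintype.card_ne_zero
  have hsub := fun x y => sub_pow_card ι x y 1
  simp only [pow_one] at hsub
  induction hP using Submodule.span_induction with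
  | mem x hx =>
    obtain ⟨i, rfl⟩ := hx
    exact Submodule.subset_span ⟨i + 1, by simp only [← pow_mul, pow_succ]⟩
  | zero => simp [hq]
  | add x y _ _ hx hy =>
    -- Additivity on sums is extracted from the subtraction rule by writing `x + y = x - (0 - y)`.
    have h0 := hsub 0 y
    have h1 := hsub x (0 - y)
    rw [zero_pow hq] at h0
    rw [h0] at h1
    have : (x + y) ^ Fintype.card F = x ^ Fintype.card F + y ^ Fintype.card F := by
      simpa using h1
    rw [this]
    exact add_mem hx hy
  | smul a x _ hx =>
    rw [_root_.smul_pow]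
    exact Submodule.smul_mem _ _ hx

/-- A `q`-linearized polynomial acts `F`-linearly on translations. -/
lemma linearized_comp (ι : F →+* K) {P : K[X]} (hP : P ∈ linearized K (Fintype.card F))
    (c : F) (t : K) :
    P.comp (X - C (ι c * t)) = P - C (ι c * P.eval t) := by
  induction hP using Submodule.span_induction with
  | mem x hx =>
    obtain ⟨i, rfl⟩ := hx
    simp only [X_pow_comp, eval_pow, eval_X]
    rw [sub_pow_card ι, ← C_pow, mul_pow, ← map_pow, FiniteField.pow_card_pow]
  | zero => simp
  | add x y _ _ hx hy =>
    rw [add_comp, hx, hy, eval_add, mul_add, C_add]; ring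
  | smul a x _ hx =>
    rw [smul_comp, hx, eval_smul, smul_sub, smul_C, smul_eq_mul, smul_eq_mul]
    congr 2; ring

lemma linearized_coeff {q n : ℕ} {P : K[X]} (hP : P ∈ linearized K q) (hn : ∀ j, n ≠ q ^ j) :
    P.coeff n = 0 := by
  induction hP using Submodule.span_induction with
  | mem x hx =>
    obtain ⟨i, rfl⟩ := hx
    simp [coeff_X_pow, hn i]
  | zero => simp
  | add x y _ _ hx hy => simp [hx, hy]
  | smul a x _ hx => simp [hx]

/-! ### The Carlitz polynomial -/

/-- Every polynomial of degree `< d + 1` is uniquely `A + c X ^ d` with `deg A < d`. -/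
lemma carlitz_succ_prod (φ : F[X] →+* K) (d : ℕ) :
    carlitz φ (d + 1) =
      ∏ c : F, (carlitz φ d).comp (X - C (φ.comp C c * φ (X ^ d))) := by
  simp only [carlitz, prod_comp]
  rw [← Finset.prod_product']
  symm
  refine Finset.prod_bij' (fun x _ => x.2 + C x.1 * X ^ d)
    (fun B _ => (B.coeff d, B - C (B.coeff d) * X ^ d)) ?_ ?_ ?_ ?_ ?_
  · rintro ⟨c, A⟩ h
    simp only [Finset.mem_product, Finset.mem_univ, true_and, mem_polysLT] at h ⊢
    refine (degree_add_le _ _).trans_lt (max_lt (h.trans ?_) ?_)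
    · exact_mod_cast d.lt_succ_self
    · exact (degree_C_mul_X_pow_le d c).trans_lt (by exact_mod_cast d.lt_succ_self)
  · intro B h
    simp only [Finset.mem_product, Finset.mem_univ, true_and, mem_polysLT] at h ⊢
    rw [degree_lt_iff_coeff_zero] at h ⊢
    intro m hm
    rcases hm.eq_or_lt with rfl | hm
    · simp
    · simp [h m hm, coeff_X_pow, hm.ne']
  · rintro ⟨c, A⟩ h
    simp only [Finset.mem_product, Finset.mem_univ, true_and, mem_polysLT] at h
    simp [coeff_eq_zero_of_degree_lt h]
  · intro B h
    simp
  · rintro ⟨c, A⟩ h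
    simp; ring

lemma carlitz_mem_linearized (φ : F[X] →+* K) (d : ℕ) :
    carlitz φ d ∈ linearized K (Fintype.card F) := by
  induction d with
  | zero =>
    have : polysLT F 0 = {0} := by
      ext A
      simp [mem_polysLT]
    simp only [carlitz, this, Finset.prod_singleton, map_zero, sub_zero]
    exact Submodule.subset_span ⟨0, by simp⟩
  | succ d ih =>
    rw [carlitz_succ_prod]
    simp only [linearized_comp _ ih]
    rw [prod_sub_mul_C, ← C_pow, ← smul_eq_C_mul]
    exact sub_mem (linearized_pow (φ.comp C) ih) (Submodule.smul_mem _ _ ih)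

open Classical in
lemma prod_erase_sub_mul_C (ι : F →+* K) (b : K) :
    ∏ c ∈ (Finset.univ : Finset F).erase 0, (X - C (ι c * b)) =
      X ^ (Fintype.card F - 1) - C (b ^ (Fintype.card F - 1)) := by
  have h := prod_sub_mul_C ι X b
  have h1 : Fintype.card F - 1 + 1 = Fintype.card F := Nat.sub_add_cancel Fintype.card_pos
  rw [← Finset.mul_prod_erase _ _ (Finset.mem_univ (0 : F))] at h
  simp only [map_zero, zero_mul, sub_zero] at h
  apply mul_left_cancel₀ (X_ne_zero : (X : K[X]) ≠ 0)
  rw [h]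
  conv_lhs => rw [← h1]
  rw [C_pow, add_tsub_cancel_right]
  ring

/-- Grouping nonzero polynomials by their monic associates. -/
lemma carlitz_eq_expand (φ : F[X] →+* K) (d : ℕ) :
    carlitz φ d = X * expand K (Fintype.card F - 1)
      (∏ A ∈ monicsLT F d, (X - C (φ A ^ (Fintype.card F - 1)))) := by
  classical
  have h0 : (0 : F[X]) ∈ polysLT F d := by simp [mem_polysLT]
  rw [carlitz, ← Finset.mul_prod_erase _ _ h0, map_prod]
  simp only [map_zero, sub_zero, map_sub, expand_X, expand_C]
  congr 1
  simp only [← prod_erase_sub_mul_C (φ.comp C)]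
  rw [← Finset.prod_product_right']
  symm
  refine Finset.prod_bij' (fun x _ => C x.1 * x.2)
    (fun B _ => (B.leadingCoeff, C B.leadingCoeff⁻¹ * B)) ?_ ?_ ?_ ?_ ?_
  · rintro ⟨c, A⟩ h
    simp only [Finset.mem_product, Finset.mem_erase, Finset.mem_univ, and_true, mem_monicsLT] at h
    simp only [Finset.mem_erase, mem_polysLT]
    exact ⟨mul_ne_zero (C_ne_zero.2 h.1) h.2.2.ne_zero, by
      rw [degree_C_mul h.1]; exact h.2.1⟩
  · intro B h
    simp only [Finset.mem_erase, mem_polysLT] at h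
    have hB := leadingCoeff_ne_zero.2 h.1
    simp only [Finset.mem_product, Finset.mem_erase, Finset.mem_univ, and_true, mem_monicsLT]
    refine ⟨hB, ?_, ?_⟩
    · rw [degree_C_mul (inv_ne_zero hB)]; exact h.2
    · rw [mul_comm]; exact monic_mul_leadingCoeff_inv h.1
  · rintro ⟨c, A⟩ h
    simp only [Finset.mem_product, Finset.mem_erase, Finset.mem_univ, and_true, mem_monicsLT] at h
    have : (C c * A).leadingCoeff = c := by simp [h.2.2.leadingCoeff]
    simp only [this, ← mul_assoc, ← C_mul, inv_mul_cancel₀ h.1, C_1, one_mul]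
  · intro B h
    simp only [Finset.mem_erase, mem_polysLT] at h
    have hB := leadingCoeff_ne_zero.2 h.1
    simp only [← mul_assoc, ← C_mul, mul_inv_cancel₀ hB, C_1, one_mul]
  · rintro ⟨c, A⟩ h
    simp

/-! ### Elementary symmetric sums over finite families -/

/-- The elementary symmetric sum over monic polynomials of degree `< d` vanishes. -/
lemma esymm_monicsLT (φ : F[X] →+* K) (hφ : Function.Injective φ) (d ℓ : ℕ)
    (h : ∀ j : ℕ, ℓ * (Fintype.card F - 1) ≠ Fintype.card F ^ j - 1) :
    ∑ s ∈ (monicsLT F d).powersetCard ℓ, ∏ A ∈ s, (φ A ^ (Fintype.card F - 1))⁻¹ = 0 := by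
  classical
  have h1 : 1 < Fintype.card F := Fintype.one_lt_card
  set u : F[X] → K := fun A => φ A ^ (Fintype.card F - 1) with hu
  have hu0 : ∀ A ∈ monicsLT F d, u A ≠ 0 := fun A hA =>
    pow_ne_zero _ ((map_ne_zero_iff φ hφ).2 (mem_monicsLT.1 hA).2.ne_zero)
  have hQ : (∏ A ∈ monicsLT F d, (X - C (u A))).coeff ℓ = 0 := by
    have h2 := linearized_coeff (n := ℓ * (Fintype.card F - 1) + 1)
      (carlitz_mem_linearized φ d) fun j hj => h j (by omega)
    rwa [carlitz_eq_expand, coeff_X_mul, coeff_expand_mul (by omega)] at h2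
  -- The generating polynomial of the symmetric sums is a constant multiple of `∏ (X - u A)`.
  have hprod : ∏ A ∈ monicsLT F d, (1 + C (-(u A)⁻¹) * X) =
      C (∏ A ∈ monicsLT F d, -(u A)⁻¹) * ∏ A ∈ monicsLT F d, (X - C (u A)) := by
    rw [map_prod, ← Finset.prod_mul_distrib]
    refine Finset.prod_congr rfl fun A hA => ?_
    have : (C (u A)⁻¹ : K[X]) * C (u A) = 1 := by rw [← C_mul, inv_mul_cancel₀ (hu0 A hA), C_1]
    rw [C_neg]
    linear_combination -this
  have hc := congrArg (fun P => coeff P ℓ) hprod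
  simp only [coeff_C_mul, hQ, mul_zero, Finset.prod_one_add, Finset.prod_mul_distrib,
    Finset.prod_const, ← map_prod, finsetSum_coeff, coeff_X_pow, Finset.prod_neg] at hc
  have hs : ∑ s ∈ (monicsLT F d).powersetCard ℓ, (-1 : K) ^ ℓ * ∏ A ∈ s, (u A)⁻¹ = 0 := by
    rw [← hc, Finset.powersetCard_eq_filter, Finset.sum_filter]
    refine Finset.sum_congr rfl fun s _ => ?_
    by_cases hsl : s.card = ℓ
    · simp [hsl]
    · simp [hsl, Ne.symm hsl]
  rw [← Finset.mul_sum] at hs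
  exact (mul_eq_zero.1 hs).resolve_left (pow_ne_zero _ (by simp))

end

/-! ### Passage to the Laurent series field -/

lemma polyEmb_coeff (F : Type) [Field F] (A : F[X]) (n : ℕ) :
    (polyEmb F A).coeff (-(n : ℤ)) = A.coeff n := by
  induction A using Polynomial.induction_on' with
  | add p q hp hq => rw [map_add, HahnSeries.coeff_add, hp, hq, coeff_add]
  | monomial m a =>
    have hT : TT F ^ m = HahnSeries.single (-(m : ℤ)) 1 := by
      simp [TT, HahnSeries.single_pow]
    have : polyEmb F (monomial m a) = HahnSeries.single (-(m : ℤ)) a := by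
      simp [polyEmb, eval₂_monomial, hT, HahnSeries.C_apply]
    rw [this, coeff_monomial, HahnSeries.coeff_single]
    simp [eq_comm]

lemma polyEmb_injective (F : Type) [Field F] : Function.Injective (polyEmb F) := by
  intro A B h
  ext n
  rw [← polyEmb_coeff, ← polyEmb_coeff, h]

/-- Let `q` be a prime power (a finite field `F` with `q = |F|`) and let `ℓ ≥ 1` not be of
the form `(qʲ - 1)/(q - 1)` for any `j ≥ 0` (equivalently `ℓ(q-1) ≠ qʲ - 1` for all `j`).
Then the elementary symmetric sum `e_ℓ(1/A^{q-1})_{A ∈ 𝒜₁}`, i.e. the sum over all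
`ℓ`-element sets of distinct monic polynomials of `∏ᵢ Aᵢ^{-(q-1)}`, vanishes in
`K̂ = F_q((T⁻¹))`. -/
theorem esymm_monic_vanishes (F : Type) [Field F] [Fintype F]
    (ℓ : ℕ) (hℓ : 0 < ℓ)
    (h : ∀ j : ℕ, ℓ * (Fintype.card F - 1) ≠ Fintype.card F ^ j - 1) :
    ∑' s : {s : Finset (Polynomial F) // s.card = ℓ ∧ ∀ A ∈ s, A.Monic},
      ∏ A ∈ s.1, ((polyEmb F A) ^ (Fintype.card F - 1))⁻¹ = 0 := by
  classical
  -- A non-summable family has `tsum` equal to `0` by convention, so only the summable case matters.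
  by_cases hsum : Summable fun s : {s : Finset (Polynomial F) // s.card = ℓ ∧ ∀ A ∈ s, A.Monic} =>
      ∏ A ∈ s.1, ((polyEmb F A) ^ (Fintype.card F - 1))⁻¹
  swap
  · exact tsum_eq_zero_of_not_summable hsum
  let S : ℕ → Finset {s : Finset (Polynomial F) // s.card = ℓ ∧ ∀ A ∈ s, A.Monic} :=
    fun d => ((monicsLT F d).powersetCard ℓ).subtype _
  have hmem : ∀ d s, s ∈ S d ↔ ∀ A ∈ s.1, A.degree < d := by
    rintro d ⟨s, hs, hm⟩
    simp only [S, Finset.mem_subtype, Finset.mem_powersetCard, hs, and_true]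
    exact ⟨fun hd A hA => (mem_monicsLT.1 (hd hA)).1,
      fun hd A hA => mem_monicsLT.2 ⟨hd A hA, hm A hA⟩⟩
  have hS : Filter.Tendsto S Filter.atTop Filter.atTop := by
    refine Filter.tendsto_atTop_finset_of_monotone (fun a b hab s hs => ?_) fun s => ?_
    · rw [hmem] at hs ⊢
      exact fun A hA => (hs A hA).trans_le (by exact_mod_cast hab)
    · refine ⟨s.1.sup natDegree + 1, (hmem _ _).2 fun A hA => ?_⟩
      refine degree_le_natDegree.trans_lt ?_
      exact_mod_cast Nat.lt_succ_of_le (Finset.le_sup (f := natDegree) hA)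
  refine tendsto_nhds_unique (hsum.hasSum.comp hS) ?_
  refine tendsto_const_nhds.congr fun d => ?_
  have hz := esymm_monicsLT (polyEmb F) (polyEmb_injective F) d ℓ h
  rw [← hz]
  symm
  refine Finset.sum_subtype_of_mem
    (fun s => ∏ A ∈ s, ((polyEmb F A) ^ (Fintype.card F - 1))⁻¹) fun s hs => ?_
  obtain ⟨hs, hc⟩ := Finset.mem_powersetCard.1 hs
  exact ⟨hc, fun A hA => (mem_monicsLT.1 (hs hA)).2⟩
end

section
/- Let p be a prime, ℓ ≥ 1, and n ≥ pℓ. Then the polynomial g_p(X_1^ℓ, …, X_n^ℓ) with integer coefficients lies in the ℤ-span of the products e_λ = e_{λ_1}⋯e_{λ_r} of elementary symmetric polynomials in X_1, …, X_n, taken over partitions λ = (λ_1 ≥ ⋯ ≥ λ_r) of pℓ different from the all-ones partition (1, 1, …, 1); equivalently, in the (unique) expansion g_p(X_1^ℓ, …, X_n^ℓ) = ∑_{|λ| = pℓ} c_λ e_λ over integers c_λ, the coefficient c_{(1,1,…,1)} is 0. -/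
/-!
By the fundamental theorem of symmetric polynomials, `G` is an integer polynomial in the
elementary symmetric polynomials, and since `G` is homogeneous of degree `pℓ`, only products
`e_μ` with `|μ| = pℓ` are needed (`homogeneousComponent_esymmAlgHom_mem_span`). The coefficient of
`e_1 ^ (pℓ)` is read off at the point `(1, 0, …, 0)`: there `e_1 = 1` while `e_k = 0` for `k ≥ 2`,
so every other `e_μ` vanishes; and `p * G = 1 ^ p - 1 = 0` there as well, so the coefficient is `0`.
-/

open MvPolynomial

theorem esymm_isHomogeneous (n k : ℕ) : (esymm (Fin n) ℤ k).IsHomogeneous k := by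
  refine IsHomogeneous.sum _ _ _ fun s hs => ?_
  rw [Finset.mem_powersetCard] at hs
  have h := IsHomogeneous.prod s (fun i => (X i : MvPolynomial (Fin n) ℤ)) (fun _ => 1)
    fun i _ => isHomogeneous_X _ _
  simpa [hs.2] using h

theorem prod_esymm_isHomogeneous (n : ℕ) (μ : Multiset ℕ) :
    ((μ.map fun m => esymm (Fin n) ℤ m).prod).IsHomogeneous μ.sum := by
  induction μ using Multiset.induction_on with
  | empty => simpa using isHomogeneous_one (Fin n) ℤ
  | cons a s ih =>
    simpa using (esymm_isHomogeneous n a).mul ih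

/-- Each degree-`N` component of an integer polynomial in the `e_k` is a `ℤ`-combination of the
products `e_μ` with `|μ| = N`, because every `e_μ` is homogeneous of degree `|μ|`. -/
theorem homogeneousComponent_esymmAlgHom_mem_span (n N : ℕ) (f : MvPolynomial (Fin n) ℤ) :
    homogeneousComponent N (esymmAlgHom (Fin n) ℤ n f : MvPolynomial (Fin n) ℤ) ∈
      Submodule.span ℤ {E : MvPolynomial (Fin n) ℤ | ∃ μ : Multiset ℕ,
        μ.sum = N ∧ (∀ m ∈ μ, 0 < m) ∧ E = (μ.map fun m => esymm (Fin n) ℤ m).prod} := by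
  rw [esymmAlgHom_apply]
  induction f using MvPolynomial.induction_on' with
  | add p q hp hq => rw [map_add, map_add]; exact add_mem hp hq
  | monomial d r =>
    set μ : Multiset ℕ := (Finsupp.toMultiset d).map fun i : Fin n => (i : ℕ) + 1 with hμ
    have h : aeval (fun i : Fin n => esymm (Fin n) ℤ (i + 1)) (monomial d r)
        = r • (μ.map fun m => esymm (Fin n) ℤ m).prod := by
      rw [aeval_monomial, hμ, Multiset.map_map, ← Algebra.smul_def, Finsupp.toMultiset_map,
        Finsupp.prod_toMultiset, Finsupp.prod_mapDomain_index (by simp) (by simp [pow_add])]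
      rfl
    rw [h, map_smul, homogeneousComponent_of_mem (prod_esymm_isHomogeneous n μ)]
    split_ifs with hN
    · refine Submodule.smul_mem _ _ (Submodule.subset_span ⟨μ, hN.symm, ?_, rfl⟩)
      intro m hm
      obtain ⟨i, -, rfl⟩ := Multiset.mem_map.1 hm
      exact Nat.succ_pos _
    · simp

theorem eval_single_esymm_one {n : ℕ} (i₀ : Fin n) :
    eval (Pi.single i₀ (1 : ℤ)) (esymm (Fin n) ℤ 1) = 1 := by
  simp [esymm_one, Pi.single_apply]

theorem eval_single_esymm_eq_zero {n k : ℕ} (i₀ : Fin n) (hk : 2 ≤ k) :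
    eval (Pi.single i₀ (1 : ℤ)) (esymm (Fin n) ℤ k) = 0 := by
  rw [esymm, map_sum]
  refine Finset.sum_eq_zero fun s hs => ?_
  rw [Finset.mem_powersetCard] at hs
  obtain ⟨j, hj, hne⟩ := Finset.exists_mem_ne (by omega : 1 < s.card) i₀
  rw [map_prod]
  exact Finset.prod_eq_zero hj (by simp [hne])

/-- Let `p` be a prime, `ℓ ≥ 1`, `n ≥ pℓ`, and let `G = g_p(X₁^ℓ, …, X_n^ℓ)`, i.e. the
integer multivariate polynomial with `p • G = (∑ᵢ Xᵢ^ℓ)ᵖ - ∑ᵢ (Xᵢ^ℓ)ᵖ`.  Then `G` lies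
in the `ℤ`-span of the products `e_μ = e_{μ₁} ⋯ e_{μ_r}` of elementary symmetric
polynomials, taken over partitions `μ` of `pℓ` (recorded as multisets of positive parts)
different from the all-ones partition `(1, 1, …, 1)`. -/
theorem gp_in_span_esymm_ne_all_ones (p : ℕ) (hp : p.Prime) (ℓ n : ℕ)
    (hℓ : 1 ≤ ℓ) (hn : p * ℓ ≤ n) (G : MvPolynomial (Fin n) ℤ)
    (hG : (p : ℤ) • G
      = (∑ i, MvPolynomial.X i ^ ℓ) ^ p - ∑ i, (MvPolynomial.X i ^ ℓ) ^ p) :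
    G ∈ Submodule.span ℤ
      {E : MvPolynomial (Fin n) ℤ | ∃ μ : Multiset ℕ,
        μ.sum = p * ℓ ∧ (∀ m ∈ μ, 0 < m) ∧ μ ≠ Multiset.replicate (p * ℓ) 1 ∧
        E = (μ.map fun m => MvPolynomial.esymm (Fin n) ℤ m).prod} := by
  have hp0 : (p : ℤ) ≠ 0 := by exact_mod_cast hp.ne_zero
  have hℓ0 : ℓ ≠ 0 := by omega
  have hinj : Function.Injective fun H : MvPolynomial (Fin n) ℤ => (p : ℤ) • H :=
    smul_right_injective _ hp0
  have hsymm : G.IsSymmetric := by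
    intro e
    apply hinj
    have h (k : ℕ) : ∑ i, (X (e i) : MvPolynomial (Fin n) ℤ) ^ k = ∑ i, X i ^ k :=
      Equiv.sum_comp e fun i => (X i : MvPolynomial (Fin n) ℤ) ^ k
    change (p : ℤ) • rename e G = (p : ℤ) • G
    rw [← map_zsmul, hG]
    simp [← pow_mul, h]
  have hX (k : ℕ) (i : Fin n) : (X i ^ k : MvPolynomial (Fin n) ℤ).IsHomogeneous k := by
    simpa using (isHomogeneous_X ℤ i).pow k
  have hhom : ((p : ℤ) • G).IsHomogeneous (p * ℓ) := by
    rw [hG, mul_comm p ℓ]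
    refine IsHomogeneous.sub ((IsHomogeneous.sum _ _ _ fun i _ => hX ℓ i).pow p) ?_
    exact IsHomogeneous.sum _ _ _ fun i _ => (hX ℓ i).pow p
  have hcomp : homogeneousComponent (p * ℓ) G = G := by
    apply hinj
    change (p : ℤ) • homogeneousComponent (p * ℓ) G = (p : ℤ) • G
    rw [← map_smul, homogeneousComponent_of_mem hhom, if_pos rfl]
  obtain ⟨f, hf⟩ := esymmAlgHom_fin_surjective ℤ (le_refl n) ⟨G, hsymm⟩
  have hmem := homogeneousComponent_esymmAlgHom_mem_span n (p * ℓ) f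
  rw [hf, hcomp] at hmem
  set S := {E : MvPolynomial (Fin n) ℤ | ∃ μ : Multiset ℕ,
        μ.sum = p * ℓ ∧ (∀ m ∈ μ, 0 < m) ∧ μ ≠ Multiset.replicate (p * ℓ) 1 ∧
        E = (μ.map fun m => MvPolynomial.esymm (Fin n) ℤ m).prod} with hS
  have hins : G ∈ Submodule.span ℤ (insert (esymm (Fin n) ℤ 1 ^ (p * ℓ)) S) := by
    refine Submodule.span_mono ?_ hmem
    rintro E ⟨μ, h1, h2, rfl⟩
    by_cases hμ : μ = Multiset.replicate (p * ℓ) 1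
    · left; simp [hμ]
    · exact Or.inr ⟨μ, h1, h2, hμ, rfl⟩
  obtain ⟨a, z, hz, hGz⟩ := Submodule.mem_span_insert.1 hins
  let i₀ : Fin n := ⟨0, (Nat.mul_pos hp.pos hℓ).trans_le hn⟩
  have hz0 : eval (Pi.single i₀ (1 : ℤ)) z = 0 := by
    clear hGz
    induction hz using Submodule.span_induction with
    | zero => simp
    | add x y _ _ hx hy => simp [hx, hy]
    | smul c x _ hx => simp [hx]
    | mem x hx =>
      obtain ⟨μ, hsum, hpos, hne, rfl⟩ := hx
      -- A partition other than the all-ones one has a part `m ≥ 2`, whose `e_m` vanishes here.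
      obtain ⟨m, hm, hm1⟩ : ∃ m ∈ μ, m ≠ 1 := by
        by_contra! hall
        have hrep := Multiset.eq_replicate_of_mem hall
        rw [hrep] at hsum
        simp only [Multiset.sum_replicate, smul_eq_mul, mul_one] at hsum
        exact hne (hsum ▸ hrep)
      have hm0 := hpos m hm
      rw [map_multiset_prod, Multiset.map_map]
      exact Multiset.prod_eq_zero
        (Multiset.mem_map.2 ⟨m, hm, eval_single_esymm_eq_zero i₀ (by omega)⟩)
  have hG0 : eval (Pi.single i₀ (1 : ℤ)) G = 0 := by
    have h := congrArg (eval (Pi.single i₀ (1 : ℤ))) hG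
    have hsum (k : ℕ) (hk : k ≠ 0) :
        ∑ i, (Pi.single i₀ (1 : ℤ) : Fin n → ℤ) i ^ k = 1 := by
      rw [Finset.sum_eq_single i₀ (fun j _ hj => by simp [hj, hk]) (by simp)]
      simp
    simp only [smul_eval, map_sub, map_pow, map_sum, eval_X, ← pow_mul] at h
    rw [hsum ℓ hℓ0, hsum _ (mul_ne_zero hℓ0 hp.ne_zero), one_pow, sub_self] at h
    exact (mul_eq_zero.1 h).resolve_left hp0
  have ha : a = 0 := by
    rw [hGz] at hG0
    simpa [smul_eval, hz0, eval_single_esymm_one, -esymm_one] using hG0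
  rw [hGz, ha, zero_smul, zero_add]
  exact hz
end

section
/- Let p be a prime and r ≥ 1 an integer. Then p divides ψ_r, the number of p-tuples (r_1, …, r_p) of nonnegative integers with r_1 + ⋯ + r_p = r and min(r_1, …, r_p) = 0. -/
/-!
The cyclic shift of coordinates acts on the tuples counted by `ψ_r`, and its `p`-th power is the
identity. As `p` is prime, the number of tuples is congruent modulo `p` to the number of
shift-invariant ones (`Equiv.Perm.card_fixedPoints_modEq`). A shift-invariant tuple is constant;
having a coordinate equal to `0`, it vanishes identically, so its sum is `0 < r`. Hence no tuple
is invariant and `p ∣ ψ_r`.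
-/

/-- For `r ∈ ℕ`, the number `ψ_r` of `p`-tuples `(r₁, …, r_p)` of nonnegative integers
with `r₁ + ⋯ + r_p = r` and `min(r₁, …, r_p) = 0` (i.e. some coordinate is `0`). -/
noncomputable def psiNat (p r : ℕ) : ℕ :=
  Nat.card {f : Fin p → ℕ // (∑ j, f j) = r ∧ ∃ j, f j = 0}

open Fin.CommRing in
theorem val_nsmul_one {p : ℕ} [NeZero p] (k : Fin p) : k.val • (1 : Fin p) = k := by
  rw [nsmul_one, Fin.cast_val_eq_self]

/-- For a prime `p` and an integer `r ≥ 1`, `p` divides `ψ_r`. -/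
theorem prime_dvd_psi (p : ℕ) (hp : p.Prime) (r : ℕ) (hr : 1 ≤ r) :
    p ∣ psiNat p r := by
  classical
  have : Fact p.Prime := ⟨hp⟩
  have : NeZero p := ⟨hp.ne_zero⟩
  let S := {f : Fin p → ℕ // (∑ j, f j) = r ∧ ∃ j, f j = 0}
  have hfin : Finite S := by
    refine Set.Finite.subset (Set.finite_Iic (fun _ : Fin p => r)) ?_
    rintro f ⟨hf, -⟩ j
    exact hf ▸ Finset.single_le_sum (fun _ _ => Nat.zero_le _) (Finset.mem_univ j)
  have := Fintype.ofFinite S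
  let shift : Function.End S := fun f =>
    ⟨fun j => f.1 (j + 1), by
      obtain ⟨f, hf, i, hi⟩ := f
      exact ⟨(Equiv.sum_comp (Equiv.addRight (1 : Fin p)) f).trans hf, i - 1, by simpa using hi⟩⟩
  have hiter (n : ℕ) : ∀ (f : S) (j : Fin p), ((shift ^ n) f).1 j = f.1 (j + n • (1 : Fin p)) := by
    induction n with
    | zero =>
      intro f j
      rw [zero_nsmul, add_zero]
      rfl
    | succ n ih =>
      intro f j
      rw [pow_succ]
      change ((shift ^ n) (shift f)).1 j = _
      rw [ih]
      change f.1 (j + n • (1 : Fin p) + 1) = _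
      rw [succ_nsmul, add_assoc]
  have hpow : shift ^ p ^ 1 = 1 := by
    funext f
    apply Subtype.ext
    funext j
    have hp1 : p • (1 : Fin p) = 0 := by
      simpa using card_nsmul_eq_zero' (x := (1 : Fin p))
    rw [pow_one, hiter, hp1, add_zero]
    rfl
  have hempty : IsEmpty (Function.fixedPoints shift) := by
    refine ⟨fun ⟨f, hf⟩ => ?_⟩
    have hconst (n : ℕ) (j : Fin p) : f.1 (j + n • (1 : Fin p)) = f.1 j := by
      rw [← hiter]
      have : (shift ^ n) f = f := by
        induction n with
        | zero => rfl
        | succ n ih =>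
          rw [pow_succ]
          change (shift ^ n) (shift f) = f
          rw [show shift f = f from hf, ih]
      rw [this]
    obtain ⟨i, hi⟩ := f.2.2
    -- Every index `j` is reached from `i`, where `f` vanishes, by `(j - i).val` unit steps.
    have hzero (j : Fin p) : f.1 j = 0 := by
      have h := hconst (j - i).val i
      rwa [val_nsmul_one, add_sub_cancel, hi] at h
    have hsum := f.2.1
    simp only [hzero, Finset.sum_const_zero] at hsum
    omega
  -- `shift ^ p ^ 1 = 1`, so the orbits have size `1` or `p`.
  have h := Equiv.Perm.card_fixedPoints_modEq hpow
  rw [Fintype.card_eq_zero (α := Function.fixedPoints shift), Nat.modEq_zero_iff_dvd,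
    ← Nat.card_eq_fintype_card] at h
  exact h
end

section
/- Let q be a power of a prime p. If a monic polynomial B in F_q[T] is divisible by two distinct monic irreducible polynomials, then p² divides ψ(B), the number of p-tuples (B_1, …, B_p) of monic polynomials with gcd(B_1, …, B_p) = 1 and B_1 B_2 ⋯ B_p = B. -/
/-!
The function `ψ` is multiplicative on coprime monic polynomials: if `A` and `C` are coprime,
splitting each entry of a tuple with product `A * C` into its `A`-part and its `C`-part is a
bijection onto pairs of tuples, and it respects the gcd condition (`psiPoly_mul`).

Moreover `p ∣ ψ(B)` for every prime `p` and every non-unit `B` (`dvd_psiPoly`): the cyclic shift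
acts on the tuples counted by `ψ(B)`, and it has no fixed point, since a constant tuple
`(b, …, b)` has gcd `b` and hence is admissible only if `b` and `B = b ^ p` are units.

Write `B = P ^ n * C` with `P ∤ C`. Both factors are non-units (the second is divisible by `Q`)
and they are coprime, so `ψ(B) = ψ(P ^ n) ψ(C)` is divisible by `p * p`.
-/

open Polynomial

/-- For a polynomial `B` over `F` and `p = char F`, the number `ψ(B)` of `p`-tuples
`(B₁, …, B_p)` of monic polynomials with `gcd(B₁, …, B_p) = 1` (every common divisor is
a unit) and `B₁ B₂ ⋯ B_p = B`. -/
noncomputable def psiPoly (F : Type) [Field F] (p : ℕ) (B : Polynomial F) : ℕ :=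
  Nat.card {f : Fin p → Polynomial F //
    (∀ j, (f j).Monic) ∧
    (∀ D : Polynomial F, (∀ j, D ∣ f j) → IsUnit D) ∧
    (∏ j, f j) = B}

open Fin.CommRing Fin.NatCast in
/-- Valid for any prime `p`, by counting modulo `p` the fixed points of the cyclic shift. If there
were infinitely many tuples, `psiPoly` would be the junk value `0`. -/
lemma dvd_psiPoly (F : Type) [Field F] (p : ℕ) (hp : p.Prime) (B : Polynomial F)
    (hB : ¬ IsUnit B) : p ∣ psiPoly F p B := by
  classical
  have : Fact p.Prime := ⟨hp⟩
  have : NeZero p := ⟨hp.ne_zero⟩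
  unfold psiPoly
  set S := {f : Fin p → Polynomial F //
    (∀ j, (f j).Monic) ∧
    (∀ D : Polynomial F, (∀ j, D ∣ f j) → IsUnit D) ∧
    (∏ j, f j) = B}
  rcases finite_or_infinite S with hfin | hinf
  swap
  · simp [Nat.card_eq_zero_of_infinite]
  have := Fintype.ofFinite S
  let shift : S → S := fun f => ⟨fun j => f.1 (j + 1), fun j => f.2.1 _, fun D hD =>
      f.2.2.1 D (fun j => by simpa using hD (j - 1)), by
      exact (Equiv.prod_comp (Equiv.addRight (1 : Fin p)) f.1).trans f.2.2.2⟩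
  have hiter : ∀ (n : ℕ) (f : S) (j : Fin p),
      (shift^[n] f).1 j = f.1 (j + (n : Fin p)) := by
    intro n
    induction n with
    | zero => intro f j; simp
    | succ n ih =>
      intro f j
      rw [Function.iterate_succ_apply, ih]
      change f.1 (j + (n : Fin p) + 1) = _
      rw [Nat.cast_succ, add_assoc]
  have hpow : shift^[p ^ 1] = id := by
    funext f
    apply Subtype.ext
    funext j
    rw [hiter]
    simp
  have hmod := Equiv.Perm.card_fixedPoints_modEq (p := p) (n := 1)
    (f := (shift : Function.End S)) ((hom_coe_pow (fun g : Function.End S => (g : S → S)) rfl (fun _ _ => rfl) _ _).trans hpow)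
  have hempty : Fintype.card (Function.fixedPoints shift) = 0 := by
    rw [Fintype.card_eq_zero_iff]
    refine ⟨fun ⟨f, hf⟩ => ?_⟩
    have hconst : ∀ j, f.1 j = f.1 0 := by
      intro j
      have h := hiter j.val f 0
      rw [Function.iterate_fixed hf] at h
      simpa using h.symm
    have hu : IsUnit (f.1 0) := f.2.2.1 _ (fun j => by rw [hconst j])
    apply hB
    rw [← f.2.2.2, Finset.prod_congr rfl (fun j _ => hconst j), Finset.prod_const]
    exact hu.pow _
  rw [hempty] at hmod
  rw [Nat.card_eq_fintype_card]
  exact (Nat.modEq_zero_iff_dvd).1 hmod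

/-- A monic divisor of a product factors into monic divisors of the two factors. -/
lemma exists_monic_dvd_mul {F : Type} [Field F] {h A C : Polynomial F} (hh : h.Monic)
    (hd : h ∣ A * C) :
    ∃ u v : Polynomial F, u.Monic ∧ v.Monic ∧ u ∣ A ∧ v ∣ C ∧ u * v = h := by
  classical
  obtain ⟨u, v, hu, hv, rfl⟩ := exists_dvd_and_dvd_of_dvd_mul hd
  have hu0 : u ≠ 0 := left_ne_zero_of_mul hh.ne_zero
  have hv0 : v ≠ 0 := right_ne_zero_of_mul hh.ne_zero
  refine ⟨normalize u, normalize v, Polynomial.monic_normalize hu0, Polynomial.monic_normalize hv0,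
    normalize_dvd_iff.2 hu, normalize_dvd_iff.2 hv, ?_⟩
  rw [← normalize_mul, hh.normalize_eq_self]

/-- Multiplicativity of `ψ` (for tuples of any length). -/
lemma psiPoly_mul (F : Type) [Field F] (p : ℕ) (A C : Polynomial F) (hA : A.Monic)
    (hC : C.Monic) (hAC : IsCoprime A C) :
    psiPoly F p (A * C) = psiPoly F p A * psiPoly F p C := by
  unfold psiPoly
  rw [← Nat.card_prod]
  symm
  refine Nat.card_congr (Equiv.ofBijective (fun x => ⟨fun j => x.1.1 j * x.2.1 j, ?_, ?_, ?_⟩)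
    ⟨?_, ?_⟩)
  · exact fun j => (x.1.2.1 j).mul (x.2.2.1 j)
  · obtain ⟨⟨f, hf, hfD, rfl⟩, ⟨g, hg, hgD, rfl⟩⟩ := x
    intro D hD
    by_contra hDu
    have hfg : ∀ i j, IsCoprime (f i) (g j) := fun i j =>
      (hAC.of_isCoprime_of_dvd_left (Finset.dvd_prod_of_mem f (Finset.mem_univ i)))
        |>.of_isCoprime_of_dvd_right (Finset.dvd_prod_of_mem g (Finset.mem_univ j))
    -- An irreducible common divisor of the products cannot divide both some `f i` and some `g j`,
    -- so it divides all entries of one of the two tuples.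
    have hπ : ∃ π : Polynomial F, Irreducible π ∧ ∀ j, π ∣ f j * g j := by
      by_cases hD0 : D = 0
      · exact ⟨X, irreducible_X, fun j => (hD0 ▸ dvd_zero _ : X ∣ D).trans (hD j)⟩
      · obtain ⟨π, h1, h2⟩ := WfDvdMonoid.exists_irreducible_factor hDu hD0
        exact ⟨π, h1, fun j => h2.trans (hD j)⟩
    obtain ⟨π, hirr, hdvd⟩ := hπ
    by_cases hall : ∀ j, π ∣ f j
    · exact hirr.not_isUnit (hfD π hall)
    · push Not at hall
      obtain ⟨i, hi⟩ := hall
      have hgi : π ∣ g i := (hirr.prime.dvd_or_dvd (hdvd i)).resolve_left hi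
      refine hirr.not_isUnit (hgD π fun j => ?_)
      exact (hirr.prime.dvd_or_dvd (hdvd j)).resolve_left fun hj =>
        hirr.not_isUnit ((hfg j i).isUnit_of_dvd' hj hgi)
  · rw [Finset.prod_mul_distrib, x.1.2.2.2, x.2.2.2.2]
  · rintro ⟨⟨f, hf, hfD, hfA⟩, ⟨g, hg, hgD, hgC⟩⟩ ⟨⟨f', hf', hfD', hfA'⟩, ⟨g', hg', hgD', hgC'⟩⟩ h
    have h' : ∀ j, f j * g j = f' j * g' j := fun j => congrFun (congrArg Subtype.val h) j
    have d1 : ∀ j, f j ∣ A := fun j => hfA ▸ Finset.dvd_prod_of_mem f (Finset.mem_univ j)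
    have d2 : ∀ j, f' j ∣ A := fun j => hfA' ▸ Finset.dvd_prod_of_mem f' (Finset.mem_univ j)
    have d3 : ∀ j, g j ∣ C := fun j => hgC ▸ Finset.dvd_prod_of_mem g (Finset.mem_univ j)
    have d4 : ∀ j, g' j ∣ C := fun j => hgC' ▸ Finset.dvd_prod_of_mem g' (Finset.mem_univ j)
    have hff : ∀ j, f j = f' j := fun j => by
      refine eq_of_monic_of_associated (hf j) (hf' j) (associated_of_dvd_dvd ?_ ?_)
      · have hc : IsCoprime (f j) (g' j) :=
          (hAC.of_isCoprime_of_dvd_left (d1 j)).of_isCoprime_of_dvd_right (d4 j)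
        exact hc.dvd_of_dvd_mul_right (h' j ▸ dvd_mul_right _ _)
      · have hc : IsCoprime (f' j) (g j) :=
          (hAC.of_isCoprime_of_dvd_left (d2 j)).of_isCoprime_of_dvd_right (d3 j)
        exact hc.dvd_of_dvd_mul_right (h' j ▸ dvd_mul_right _ _)
    have hgg : ∀ j, g j = g' j := fun j => by
      have := h' j
      rw [← hff j] at this
      exact mul_left_cancel₀ (hf j).ne_zero this
    obtain rfl : f = f' := funext hff
    obtain rfl : g = g' := funext hgg
    rfl
  · rintro ⟨h, hh, hhD, hprod⟩
    have hd : ∀ j, h j ∣ A * C := fun j => hprod ▸ Finset.dvd_prod_of_mem h (Finset.mem_univ j)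
    choose u v hu hv huA hvC huv using fun j => exists_monic_dvd_mul (hh j) (hd j)
    have hmul : (∏ j, u j) * ∏ j, v j = A * C := by
      rw [← Finset.prod_mul_distrib, ← hprod]
      exact Finset.prod_congr rfl fun j _ => huv j
    have hPA : ∏ j, u j = A := by
      refine eq_of_monic_of_associated (monic_prod_of_monic _ _ fun j _ => hu j) hA
        (associated_of_dvd_dvd ?_ ?_)
      · have hc : IsCoprime (∏ j, u j) C :=
          IsCoprime.prod_left fun j _ => hAC.of_isCoprime_of_dvd_left (huA j)
        exact hc.dvd_of_dvd_mul_right (hmul ▸ dvd_mul_right _ _)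
      · have hc : IsCoprime A (∏ j, v j) :=
          IsCoprime.prod_right fun j _ => hAC.of_isCoprime_of_dvd_right (hvC j)
        exact hc.dvd_of_dvd_mul_right (hmul ▸ dvd_mul_right _ _)
    have hPC : ∏ j, v j = C := by
      rw [hPA] at hmul
      exact mul_left_cancel₀ hA.ne_zero hmul
    refine ⟨⟨⟨u, hu, fun D hD => hhD D fun j => ?_, hPA⟩,
      ⟨v, hv, fun D hD => hhD D fun j => ?_, hPC⟩⟩, ?_⟩
    · exact huv j ▸ (hD j).mul_right _
    · exact huv j ▸ (hD j).mul_left _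
    · exact Subtype.ext (funext huv)

/-- Let `q` be a power of a prime `p` (a finite field `F` with `q = |F|`, `p = char F`).
If a monic polynomial `B` in `F_q[T]` is divisible by two distinct monic irreducible
polynomials, then `p²` divides `ψ(B)`. -/
theorem sq_char_dvd_psiPoly (F : Type) [Field F] [Fintype F]
    (B P Q : Polynomial F) (hB : B.Monic)
    (hP : P.Monic) (hPirr : Irreducible P) (hQ : Q.Monic) (hQirr : Irreducible Q)
    (hne : P ≠ Q) (hPB : P ∣ B) (hQB : Q ∣ B) :
    ringChar F ^ 2 ∣ psiPoly F (ringChar F) B := by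
  have hp : (ringChar F).Prime := CharP.char_is_prime F (ringChar F)
  obtain ⟨C, hBC, hPC⟩ := (FiniteMultiplicity.of_not_isUnit hPirr.not_isUnit
    hB.ne_zero).exists_eq_pow_mul_and_not_dvd
  set n := multiplicity P B
  have hn : n ≠ 0 := multiplicity_ne_zero.2 hPB
  have hPn : (P ^ n).Monic := hP.pow n
  have hC : C.Monic := hPn.of_mul_monic_left (hBC ▸ hB)
  have hcop : IsCoprime (P ^ n) C := ((hPirr.coprime_iff_not_dvd).2 hPC).pow_left
  have hQC : Q ∣ C := by
    rw [hBC] at hQB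
    refine (hQirr.prime.dvd_or_dvd hQB).resolve_left fun h => hne ?_
    exact (eq_of_monic_of_associated hQ hP
      (hQirr.associated_of_dvd hPirr (hQirr.prime.dvd_of_dvd_pow h))).symm
  rw [hBC, psiPoly_mul F _ _ _ hPn hC hcop, sq]
  exact mul_dvd_mul
    (dvd_psiPoly F _ hp _ fun h => hPirr.not_isUnit ((isUnit_pow_iff hn).1 h))
    (dvd_psiPoly F _ hp _ fun h => hQirr.not_isUnit (isUnit_of_dvd_unit hQC h))
end
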